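/- Z-norm bound for T_{1,f} (Lemma 3.3(i), estimate (pi20)): For every h ∈ L∞(I_δ), one has ‖T_{1,f}h‖_Z ≲ ε·log(1/ε)·‖h‖_{L∞(I_{2√ε})}. -/

import Mathlib

noncomputable section
open Set MeasureTheory Filter Real

/-- The principal value at `α` of the integral `∫_ℝ F(β) dβ`, understood as the limit of the
integrals over `{β : r < |α − β|}` as `r → 0⁺`. -/
def pvI (F : ℝ → ℝ) (α : ℝ) : ℝ :=
  limUnder (nhdsWithin (0:ℝ) (Ioi 0)) (fun r => ∫ β in {β : ℝ | r < |α - β|}, F β)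

/-- `ψ` is a smooth even cutoff, with values in `[0,1]`, supported in `[−1,1]`,
equal to `1` on `[−1/2,1/2]`. -/
def IsCutoff (ψ : ℝ → ℝ) : Prop :=
  ContDiff ℝ (⊤ : ℕ∞) ψ ∧ (∀ x : ℝ, ψ (-x) = ψ x) ∧ (∀ x : ℝ, ψ x ∈ Icc (0:ℝ) 1) ∧
    (∀ x : ℝ, 1 < |x| → ψ x = 0) ∧ (∀ x : ℝ, |x| ≤ 1/2 → ψ x = 1)

/-- The rescaled cutoff `ψ_r(x) = ψ(x/r)`. -/
def scut (ψ : ℝ → ℝ) (r x : ℝ) : ℝ := ψ (x / r)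

/-- `X̃(α) = 2ε + f(α) + g(α)`. -/
def Xt (ε : ℝ) (f g : ℝ → ℝ) (α : ℝ) : ℝ := 2 * ε + f α + g α

/-- The operator `T_{1,f}`. -/
def T1 (ψ : ℝ → ℝ) (ε : ℝ) (f : ℝ → ℝ) (h : ℝ → ℝ) (α : ℝ) : ℝ :=
  (2 * π)⁻¹ * pvI (fun β =>
    (f α - f β) / ((α - β) ^ 2 + (f α - f β) ^ 2) * h β * scut ψ (Real.sqrt ε) (α - β)) α

/-- The operator `T_{2,f}`. -/
def T2 (ψ : ℝ → ℝ) (ε : ℝ) (f : ℝ → ℝ) (h : ℝ → ℝ) (α : ℝ) : ℝ :=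
  (2 * π)⁻¹ * pvI (fun β =>
    (α - β) / ((α - β) ^ 2 + (f α - f β) ^ 2) * h β * scut ψ (Real.sqrt ε) (α - β)) α

/-- The operator `T_{3,(f,g)}`. -/
def T3 (ψ : ℝ → ℝ) (ε : ℝ) (f g : ℝ → ℝ) (h : ℝ → ℝ) (α : ℝ) : ℝ :=
  (2 * π)⁻¹ * ∫ β : ℝ,
    (2 * ε + f α + g β) / ((α - β) ^ 2 + (2 * ε + f α + g β) ^ 2) * h β *
      scut ψ (Real.sqrt ε) (α - β)

/-- The operator `T_{4,(f,g)}`. -/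
def T4 (ψ : ℝ → ℝ) (ε : ℝ) (f g : ℝ → ℝ) (h : ℝ → ℝ) (α : ℝ) : ℝ :=
  (2 * π)⁻¹ * ∫ β : ℝ,
    (α - β) / ((α - β) ^ 2 + (2 * ε + f α + g β) ^ 2) * h β * scut ψ (Real.sqrt ε) (α - β)

/-- The kernel of the operator `H`. -/
def Hker (ψ : ℝ → ℝ) (ε : ℝ) (f g : ℝ → ℝ) (α β : ℝ) : ℝ :=
  (α - β)⁻¹ * ((Xt ε f g α) ^ 2 / ((α - β) ^ 2 + (Xt ε f g α) ^ 2)) *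
    scut ψ (Real.sqrt ε / 2 ^ 6) α * scut ψ (Real.sqrt ε / 2 ^ 6) (α - β)

/-- The kernel of the operator `M`. -/
def Mker (ψ : ℝ → ℝ) (ε : ℝ) (f g : ℝ → ℝ) (α β : ℝ) : ℝ :=
  (Xt ε f g α) / ((α - β) ^ 2 + (Xt ε f g α) ^ 2) *
    scut ψ (Real.sqrt ε / 2 ^ 6) α * scut ψ (Real.sqrt ε / 2 ^ 6) (α - β)

/-- The operator `H` (a principal value integral in the second variable of the kernel). -/
def Hop (ψ : ℝ → ℝ) (ε : ℝ) (f g : ℝ → ℝ) (h : ℝ → ℝ) (α : ℝ) : ℝ :=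
  (2 * π)⁻¹ * pvI (fun β => Hker ψ ε f g α β * h β) α

/-- The adjoint operator `H*` (integration of the kernel of `H` in its first variable). -/
def Hstar (ψ : ℝ → ℝ) (ε : ℝ) (f g : ℝ → ℝ) (φ : ℝ → ℝ) (β : ℝ) : ℝ :=
  (2 * π)⁻¹ * pvI (fun α => Hker ψ ε f g α β * φ α) β

/-- The operator `M`. -/
def Mop (ψ : ℝ → ℝ) (ε : ℝ) (f g : ℝ → ℝ) (h : ℝ → ℝ) (α : ℝ) : ℝ :=
  (2 * π)⁻¹ * ∫ β : ℝ, Mker ψ ε f g α β * h β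

/-- The adjoint operator `M*` (integration of the kernel of `M` in its first variable). -/
def Mstar (ψ : ℝ → ℝ) (ε : ℝ) (f g : ℝ → ℝ) (φ : ℝ → ℝ) (β : ℝ) : ℝ :=
  (2 * π)⁻¹ * ∫ α : ℝ, Mker ψ ε f g α β * φ α

/-- The class `C₂` of test functions: `C¹` functions compactly supported in `I_δ = (−δ,δ)` with
`|φ⁽ᵏ⁾(α)| ≤ ε/(ε^{2+k} + |α|^{2+k})` on `I_δ` for `k ∈ {0,1}`. -/
def InC2 (δ ε : ℝ) (φ : ℝ → ℝ) : Prop :=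
  ContDiff ℝ 1 φ ∧ HasCompactSupport φ ∧ tsupport φ ⊆ Ioo (-δ) δ ∧
    ∀ α ∈ Ioo (-δ) δ,
      |φ α| ≤ ε / (ε ^ 2 + |α| ^ 2) ∧ |deriv φ α| ≤ ε / (ε ^ 3 + |α| ^ 3)

/-- The standing hypotheses on `f, g : (−δ,δ) → ℝ`: they are `C⁵`, with
`‖f‖_{C³} + ‖g‖_{C³} ≤ A`, `f(0) = f'(0) = g(0) = g'(0) = 0`, and
`f(α) + g(β) ≥ −ε` for `α, β ∈ (−4√ε, 4√ε)`. -/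
def GoodFG (δ A ε : ℝ) (f g : ℝ → ℝ) : Prop :=
  ContDiffOn ℝ 5 f (Ioo (-δ) δ) ∧ ContDiffOn ℝ 5 g (Ioo (-δ) δ) ∧
    f 0 = 0 ∧ g 0 = 0 ∧
    derivWithin f (Ioo (-δ) δ) 0 = 0 ∧ derivWithin g (Ioo (-δ) δ) 0 = 0 ∧
    (∀ x ∈ Ioo (-δ) δ, ∀ i : ℕ, i ≤ 3 →
      |iteratedDerivWithin i f (Ioo (-δ) δ) x| + |iteratedDerivWithin i g (Ioo (-δ) δ) x| ≤ A) ∧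
    (∀ α ∈ Ioo (-(4 * Real.sqrt ε)) (4 * Real.sqrt ε),
      ∀ β ∈ Ioo (-(4 * Real.sqrt ε)) (4 * Real.sqrt ε), -ε ≤ f α + g β)

section

def Pk (y x : ℝ) : ℝ := y / (x ^ 2 + y ^ 2)
def Qk (y x : ℝ) : ℝ := x / (x ^ 2 + y ^ 2)

lemma den_pos {y : ℝ} (hy : 0 < y) (x : ℝ) : 0 < x ^ 2 + y ^ 2 := by positivity

lemma Pk_cont {y : ℝ} (hy : 0 < y) : Continuous (Pk y) := by
  unfold Pk
  exact continuous_const.div (by fun_prop) (fun x => (den_pos hy x).ne')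

lemma Qk_cont {y : ℝ} (hy : 0 < y) : Continuous (Qk y) := by
  unfold Qk
  exact continuous_id.div (by fun_prop) (fun x => (den_pos hy x).ne')

lemma Pk_nonneg {y : ℝ} (hy : 0 < y) (x : ℝ) : 0 ≤ Pk y x := by unfold Pk; positivity

lemma Pk_eq {y : ℝ} (hy : 0 < y) (x : ℝ) : Pk y x = y⁻¹ * (1 + (y⁻¹ * x) ^ 2)⁻¹ := by
  have := den_pos hy x
  unfold Pk
  field_simp
  ring

lemma Pk_int {y : ℝ} (hy : 0 < y) : Integrable (Pk y) := by
  have h := (integrable_inv_one_add_sq.comp_mul_left' (R := y⁻¹) (by positivity)).const_mul y⁻¹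
  exact h.congr (Eventually.of_forall fun x => (Pk_eq hy x).symm)

lemma Pk_integral {y : ℝ} (hy : 0 < y) : ∫ x, Pk y x = π := by
  simp_rw [Pk_eq hy]
  rw [integral_const_mul, Measure.integral_comp_mul_left (fun u : ℝ => (1 + u ^ 2)⁻¹) y⁻¹,
    integral_univ_inv_one_add_sq]
  rw [inv_inv, abs_of_pos hy, smul_eq_mul]
  field_simp

lemma Pk_neg (y x : ℝ) : Pk y (-x) = Pk y x := by simp [Pk]

lemma Pk_le {y : ℝ} (hy : 0 < y) (x : ℝ) : Pk y x ≤ 1 / y := by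
  unfold Pk
  rw [div_le_div_iff₀ (den_pos hy x) hy]
  nlinarith [sq_nonneg x]

lemma Pk_sq_le {y : ℝ} (hy : 0 < y) (x : ℝ) : Pk y x ^ 2 ≤ Pk y x / y := by
  have := mul_le_mul_of_nonneg_left (Pk_le hy x) (Pk_nonneg hy x)
  calc _ = Pk y x * Pk y x := sq _
    _ ≤ _ := this
    _ = _ := by ring

lemma Qk_sq_le {y : ℝ} (hy : 0 < y) (x : ℝ) : Qk y x ^ 2 ≤ Pk y x / y := by
  have h := den_pos hy x
  have e : Pk y x / y = 1 / (x ^ 2 + y ^ 2) := by unfold Pk; field_simp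
  rw [e]; unfold Qk
  rw [div_pow, div_le_div_iff₀ (by positivity) h]
  nlinarith [sq_nonneg (x * y), sq_nonneg x, sq_nonneg y, sq_nonneg (y^2)]

lemma Qk_le {y : ℝ} (hy : 0 < y) (x : ℝ) : |Qk y x| ≤ 1 / y := by
  have h := (Qk_sq_le hy x).trans (div_le_div_of_nonneg_right (Pk_le hy x) hy.le)
  have : Qk y x ^ 2 ≤ (1 / y) ^ 2 := h.trans (le_of_eq (by ring))
  exact abs_le_of_sq_le_sq this (by positivity)

def Wk (y a b : ℝ) : ℝ := Qk y a * Qk y b - Pk y a * Pk y b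

lemma Wk_le {y : ℝ} (hy : 0 < y) (a b : ℝ) : |Wk y a b| ≤ (Pk y a + Pk y b) / y := by
  have h1 := Qk_sq_le hy a
  have h2 := Qk_sq_le hy b
  have h3 := Pk_sq_le hy a
  have h4 := Pk_sq_le hy b
  rw [add_div]
  unfold Wk
  rw [abs_le]
  constructor <;> nlinarith [sq_nonneg (Qk y a - Qk y b), sq_nonneg (Qk y a + Qk y b),
    sq_nonneg (Pk y a - Pk y b), sq_nonneg (Pk y a + Pk y b)]

lemma Wk_int {y : ℝ} (hy : 0 < y) (t s : ℝ) : Integrable (fun x => Wk y (x - t) (x - s)) := by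
  have hb : Integrable (fun x => (Pk y (x - t) + Pk y (x - s)) / y) :=
    (((Pk_int hy).comp_sub_right t).add ((Pk_int hy).comp_sub_right s)).div_const y
  refine hb.mono' ?_ (Eventually.of_forall fun x => ?_)
  · have := Qk_cont hy
    have := Pk_cont hy
    apply Continuous.aestronglyMeasurable
    unfold Wk
    fun_prop
  · rw [Real.norm_eq_abs]; exact Wk_le hy _ _

lemma Qk_tendsto {y : ℝ} (hy : 0 < y) : Tendsto (Qk y) (cocompact ℝ) (nhds 0) := by
  have h0 : Tendsto (fun x : ℝ => |x|⁻¹) (cocompact ℝ) (nhds 0) :=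
    tendsto_inv_atTop_zero.comp tendsto_norm_cocompact_atTop
  refine squeeze_zero_norm (fun x => ?_) h0
  rw [Real.norm_eq_abs]
  unfold Qk
  rcases eq_or_ne x 0 with rfl | hx
  · simp
  have hx' := abs_pos.2 hx
  rw [abs_div, abs_of_pos (den_pos hy x), ← one_div, div_le_div_iff₀ (den_pos hy x) hx']
  nlinarith [sq_abs x, sq_nonneg y]

lemma Pk_tendsto {y : ℝ} (hy : 0 < y) : Tendsto (Pk y) (cocompact ℝ) (nhds 0) := by
  have h0 : Tendsto (fun x : ℝ => |x|⁻¹) (cocompact ℝ) (nhds 0) :=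
    tendsto_inv_atTop_zero.comp tendsto_norm_cocompact_atTop
  refine squeeze_zero_norm' ?_ h0
  have : ∀ᶠ x in cocompact ℝ, y ≤ ‖x‖ := tendsto_norm_cocompact_atTop.eventually_ge_atTop y
  filter_upwards [this] with x hx
  rw [Real.norm_eq_abs] at *
  unfold Pk
  have hx' : 0 < |x| := hy.trans_le hx
  rw [abs_div, abs_of_pos (den_pos hy x), ← one_div, div_le_div_iff₀ (den_pos hy x) hx',
    abs_of_pos hy]
  nlinarith [sq_abs x, sq_nonneg y]

lemma Wk_integral {y : ℝ} (hy : 0 < y) (t s : ℝ) : ∫ x, Wk y (x - t) (x - s) = 0 := by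
  have sub_co : ∀ c : ℝ, Tendsto (fun x : ℝ => x - c) (cocompact ℝ) (cocompact ℝ) := fun c =>
    (Homeomorph.subRight c).isClosedEmbedding.tendsto_cocompact
  have key : ∃ F : ℝ → ℝ, (∀ x, HasDerivAt F (Wk y (x - t) (x - s)) x) ∧
      Tendsto F (cocompact ℝ) (nhds 0) := by
    rcases eq_or_ne t s with rfl | hts
    · refine ⟨fun x => - Qk y (x - t), fun x => ?_, ?_⟩
      · have h := den_pos hy (x - t)
        have h1 : HasDerivAt (fun x : ℝ => x - t) 1 x := (hasDerivAt_id x).sub_const t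
        have h2 := (h1.div ((h1.pow 2).add_const (y ^ 2)) h.ne').neg
        refine h2.congr_deriv ?_
        unfold Wk Qk Pk
        simp
        field_simp
        ring
      · simpa using ((Qk_tendsto hy).comp (sub_co t)).neg
    · have hne : t - s ≠ 0 := sub_ne_zero.2 hts
      refine ⟨fun x => (Real.log ((x - t) ^ 2 + y ^ 2) - Real.log ((x - s) ^ 2 + y ^ 2)) /
        (2 * (t - s)), fun x => ?_, ?_⟩
      · have h := den_pos hy (x - t)
        have h' := den_pos hy (x - s)
        have h1 : HasDerivAt (fun x : ℝ => x - t) 1 x := (hasDerivAt_id x).sub_const t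
        have h1' : HasDerivAt (fun x : ℝ => x - s) 1 x := (hasDerivAt_id x).sub_const s
        have h2 := ((((h1.pow 2).add_const (y ^ 2)).log h.ne').sub
          (((h1'.pow 2).add_const (y ^ 2)).log h'.ne')).div_const (2 * (t - s))
        refine h2.congr_deriv ?_
        unfold Wk Qk Pk
        simp
        field_simp
        ring
      · have e : ∀ x : ℝ, (Real.log ((x - t) ^ 2 + y ^ 2) - Real.log ((x - s) ^ 2 + y ^ 2)) /
            (2 * (t - s)) = Real.log (1 + (s - t) * (2 * Qk y (x - s) + (s - t) / y * Pk y (x - s)))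
            / (2 * (t - s)) := by
          intro x
          have h := den_pos hy (x - t)
          have h' := den_pos hy (x - s)
          rw [← Real.log_div h.ne' h'.ne']
          congr 2
          unfold Qk Pk
          field_simp
          ring
        simp_rw [e]
        have l1 : Tendsto (fun x => 1 + (s - t) * (2 * Qk y (x - s) + (s - t) / y * Pk y (x - s)))
            (cocompact ℝ) (nhds (1 + (s - t) * (2 * 0 + (s - t) / y * 0))) := by
          have q := (Qk_tendsto hy).comp (sub_co s)
          have p := (Pk_tendsto hy).comp (sub_co s)
          exact (((q.const_mul 2).add (p.const_mul _)).const_mul _).const_add 1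
        have l2 := (l1.log (by simp)).div_const (2 * (t - s))
        simpa using l2
  obtain ⟨F, hF, hlim⟩ := key
  have := integral_of_hasDerivAt_of_tendsto hF (Wk_int hy t s)
    (hlim.mono_left atBot_le_cocompact) (hlim.mono_left atTop_le_cocompact)
  simpa using this

def Uk (y : ℝ) (h : ℝ → ℝ) (x : ℝ) : ℝ := ∫ t, h t * Qk y (x - t)
def Vk (y : ℝ) (h : ℝ → ℝ) (x : ℝ) : ℝ := ∫ t, h t * Pk y (x - t)

/-- bounded, measurable, supported in `[-B,B]` -/
structure Bdd (h : ℝ → ℝ) (M B : ℝ) : Prop where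
  meas : Measurable h
  bd : ∀ x, |h x| ≤ M
  supp : ∀ x, B < |x| → h x = 0
  Bpos : 0 ≤ B

lemma Bdd.M_nonneg {h : ℝ → ℝ} {M B : ℝ} (H : Bdd h M B) : 0 ≤ M := (abs_nonneg _).trans (H.bd 0)

lemma Bdd.le_ind {h : ℝ → ℝ} {M B : ℝ} (H : Bdd h M B) (x : ℝ) :
    |h x| ≤ (Icc (-B) B).indicator (fun _ => M) x := by
  by_cases hx : x ∈ Icc (-B) B
  · rw [indicator_of_mem hx]; exact H.bd x
  · rw [indicator_of_notMem hx, H.supp x, abs_zero]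
    by_contra hc
    exact hx (abs_le.1 (not_lt.1 hc))

lemma Bdd.integrable {h : ℝ → ℝ} {M B : ℝ} (H : Bdd h M B) : Integrable h := by
  have h1 : Integrable ((Icc (-B) B).indicator (fun _ => M)) := by
    rw [integrable_indicator_iff measurableSet_Icc]
    exact integrableOn_const (by simp)
  exact h1.mono' H.meas.aestronglyMeasurable (Eventually.of_forall H.le_ind)

lemma Bdd.integral_le {h : ℝ → ℝ} {M B : ℝ} (H : Bdd h M B) : ∫ x, |h x| ≤ 2 * B * M := by
  have h1 : Integrable ((Icc (-B) B).indicator (fun _ => M)) := by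
    rw [integrable_indicator_iff measurableSet_Icc]
    exact integrableOn_const (by simp)
  have := integral_mono H.integrable.abs h1 H.le_ind
  refine this.trans (le_of_eq ?_)
  rw [integral_indicator measurableSet_Icc]
  have := H.Bpos
  simp [Real.volume_real_Icc]
  left
  rw [max_eq_left (by linarith)]; ring

lemma Vk_le {h : ℝ → ℝ} {M B y : ℝ} (H : Bdd h M B) (hy : 0 < y) (x : ℝ) :
    ∫ t, |h t| * Pk y (x - t) ≤ π * M := by
  have hi : Integrable (fun t => M * Pk y (x - t)) := ((Pk_int hy).comp_sub_left x).const_mul M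
  have := integral_mono_of_nonneg (f := fun t => |h t| * Pk y (x - t)) 
    (Eventually.of_forall fun t => mul_nonneg (abs_nonneg _) (Pk_nonneg hy _)) hi
    (Eventually.of_forall fun t => mul_le_mul_of_nonneg_right (H.bd t) (Pk_nonneg hy _))
  refine this.trans (le_of_eq ?_)
  rw [integral_const_mul, integral_sub_left_eq_self (Pk y), Pk_integral hy, mul_comm]

lemma Vk_abs_le {h : ℝ → ℝ} {y : ℝ} (hy : 0 < y) (x : ℝ) :
    |Vk y h x| ≤ ∫ t, |h t| * Pk y (x - t) := by
  have := abs_integral_le_integral_abs (f := fun t => h t * Pk y (x - t)) (μ := volume)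
  refine this.trans (le_of_eq (integral_congr_ae (Eventually.of_forall fun t => ?_)))
  simp only [abs_mul, abs_of_nonneg (Pk_nonneg hy _)]

lemma HP_int {h : ℝ → ℝ} {M B y : ℝ} (H : Bdd h M B) (hy : 0 < y) :
    Integrable (fun p : ℝ × ℝ => |h p.2| * Pk y (p.1 - p.2)) (volume.prod volume) := by
  have hm : Measurable (fun p : ℝ × ℝ => |h p.2| * Pk y (p.1 - p.2)) := by
    have := H.meas
    have := (Pk_cont hy).measurable
    fun_prop
  rw [integrable_prod_iff' hm.aestronglyMeasurable]
  refine ⟨Eventually.of_forall fun t => ((Pk_int hy).comp_sub_right t).const_mul |h t|, ?_⟩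
  have e : (fun t => ∫ x, ‖|h t| * Pk y (x - t)‖) = fun t => |h t| * π := by
    ext t
    simp_rw [norm_mul, Real.norm_eq_abs, abs_abs, abs_of_nonneg (Pk_nonneg hy _)]
    rw [integral_const_mul, integral_sub_right_eq_self (Pk y), Pk_integral hy]
  simp only [e]
  exact H.integrable.abs.mul_const _

lemma HW_int {h : ℝ → ℝ} {M B y : ℝ} (H : Bdd h M B) (hy : 0 < y) :
    Integrable (fun p : ℝ × (ℝ × ℝ) => h p.2.1 * h p.2.2 * Wk y (p.1 - p.2.1) (p.1 - p.2.2))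
      (volume.prod (volume.prod volume)) := by
  have hm : Measurable
      (fun p : ℝ × (ℝ × ℝ) => h p.2.1 * h p.2.2 * Wk y (p.1 - p.2.1) (p.1 - p.2.2)) := by
    have := H.meas
    have := (Pk_cont hy).measurable
    have := (Qk_cont hy).measurable
    unfold Wk
    fun_prop
  rw [integrable_prod_iff' hm.aestronglyMeasurable]
  refine ⟨Eventually.of_forall fun t => (Wk_int hy t.1 t.2).const_mul (h t.1 * h t.2), ?_⟩
  have hi : Integrable (fun t : ℝ × ℝ => |h t.1| * |h t.2| * (2 * π / y)) 
    (volume.prod volume) := (H.integrable.abs.mul_prod H.integrable.abs).mul_const _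
  refine hi.mono' ?_ (Eventually.of_forall fun t => ?_)
  · exact (hm.norm.stronglyMeasurable.integral_prod_left').aestronglyMeasurable
  · rw [Real.norm_of_nonneg (integral_nonneg fun _ => norm_nonneg _)]
    simp_rw [norm_mul, Real.norm_eq_abs]
    rw [integral_const_mul]
    refine mul_le_mul_of_nonneg_left ?_ (by positivity)
    have hb : Integrable (fun x => (Pk y (x - t.1) + Pk y (x - t.2)) / y) :=
      (((Pk_int hy).comp_sub_right t.1).add ((Pk_int hy).comp_sub_right t.2)).div_const y
    refine (integral_mono (Wk_int hy t.1 t.2).abs hb (fun x => Wk_le hy _ _)).trans (le_of_eq ?_)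
    rw [integral_div, integral_add ((Pk_int hy).comp_sub_right t.1) 
      ((Pk_int hy).comp_sub_right t.2), integral_sub_right_eq_self (Pk y),
      integral_sub_right_eq_self (Pk y), Pk_integral hy]
    ring

lemma hQ_int {h : ℝ → ℝ} {M B y : ℝ} (H : Bdd h M B) (hy : 0 < y) (x : ℝ) :
    Integrable (fun t => h t * Qk y (x - t)) :=
  H.integrable.mul_bdd (c := 1 / y)
    ((Qk_cont hy).comp (continuous_const.sub continuous_id)).aestronglyMeasurable
    (Eventually.of_forall fun t => Qk_le hy _)

lemma hP_int {h : ℝ → ℝ} {M B y : ℝ} (H : Bdd h M B) (hy : 0 < y) (x : ℝ) :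
    Integrable (fun t => h t * Pk y (x - t)) :=
  H.integrable.mul_bdd (c := 1 / y)
    ((Pk_cont hy).comp (continuous_const.sub continuous_id)).aestronglyMeasurable
    (Eventually.of_forall fun t => by
      rw [Real.norm_of_nonneg (Pk_nonneg hy _)]; exact Pk_le hy _)

lemma UV_eq {h : ℝ → ℝ} {M B y : ℝ} (H : Bdd h M B) (hy : 0 < y) (x : ℝ) :
    ∫ t : ℝ × ℝ, h t.1 * h t.2 * Wk y (x - t.1) (x - t.2) = Uk y h x ^ 2 - Vk y h x ^ 2 := by
  have e1 := integral_prod_mul (μ := volume) (ν := volume) (fun t => h t * Qk y (x - t))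
    (fun t => h t * Qk y (x - t))
  have e2 := integral_prod_mul (μ := volume) (ν := volume) (fun t => h t * Pk y (x - t))
    (fun t => h t * Pk y (x - t))
  have i1 := (hQ_int H hy x).mul_prod (hQ_int H hy x)
  have i2 := (hP_int H hy x).mul_prod (hP_int H hy x)
  unfold Uk Vk
  rw [sq, sq, ← e1, ← e2, ← integral_sub i1 i2]
  refine integral_congr_ae (Eventually.of_forall fun t => ?_)
  simp only [Wk]
  ring

lemma Uk_L2 {h : ℝ → ℝ} {M B y : ℝ} (H : Bdd h M B) (hy : 0 < y) :
    Integrable (fun x => Uk y h x ^ 2) ∧ ∫ x, Uk y h x ^ 2 ≤ 2 * π ^ 2 * B * M ^ 2 := by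
  have hW := HW_int H hy
  have i1 : Integrable (fun x => Uk y h x ^ 2 - Vk y h x ^ 2) :=
    hW.integral_prod_left.congr (Eventually.of_forall fun x => UV_eq H hy x)
  have e1 : ∫ x, (Uk y h x ^ 2 - Vk y h x ^ 2) = 0 := by
    simp_rw [← UV_eq H hy]
    have := integral_integral_swap (f := fun x (t : ℝ × ℝ) => h t.1 * h t.2 * Wk y (x - t.1) (x - t.2)) hW
    refine Eq.trans this ?_
    simp only [integral_const_mul, Wk_integral hy, mul_zero, integral_zero]
  have hP := HP_int H hy
  have iV : Integrable (fun x => ∫ t, |h t| * Pk y (x - t)) := hP.integral_prod_left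
  have eV : ∫ x, ∫ t, |h t| * Pk y (x - t) ≤ π * (2 * B * M) := by
    rw [integral_integral_swap hP]
    simp_rw [integral_const_mul, integral_sub_right_eq_self (Pk y), Pk_integral hy]
    rw [integral_mul_const, mul_comm]
    exact mul_le_mul_of_nonneg_left H.integral_le pi_pos.le
  have hVm : Measurable (fun x => Vk y h x) := by
    have hm : Measurable (fun p : ℝ × ℝ => h p.2 * Pk y (p.1 - p.2)) := by
      have := H.meas
      have := (Pk_cont hy).measurable
      fun_prop
    exact hm.stronglyMeasurable.integral_prod_right'.measurable
  have hVb : ∀ x, Vk y h x ^ 2 ≤ π * M * ∫ t, |h t| * Pk y (x - t) := fun x => by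
    have a1 := Vk_abs_le (h := h) hy x
    have a2 := a1.trans (Vk_le H hy x)
    rw [← sq_abs, sq]
    exact mul_le_mul a2 a1 (abs_nonneg _) (mul_nonneg pi_pos.le H.M_nonneg)
  have i2 : Integrable (fun x => Vk y h x ^ 2) :=
    (iV.const_mul (π * M)).mono' (hVm.pow_const 2).aestronglyMeasurable
      (Eventually.of_forall fun x => by
        rw [Real.norm_of_nonneg (sq_nonneg _)]; exact hVb x)
  have e2 : ∫ x, Vk y h x ^ 2 ≤ 2 * π ^ 2 * B * M ^ 2 := by
    refine (integral_mono i2 (iV.const_mul (π * M)) hVb).trans ?_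
    rw [integral_const_mul]
    refine (mul_le_mul_of_nonneg_left eV (mul_nonneg pi_pos.le H.M_nonneg)).trans (le_of_eq ?_)
    ring
  have i3 : Integrable (fun x => Uk y h x ^ 2) :=
    (i1.add i2).congr (Eventually.of_forall fun x => by simp)
  refine ⟨i3, ?_⟩
  rw [integral_sub i3 i2] at e1
  linarith

lemma Uk_meas {h : ℝ → ℝ} {M B y : ℝ} (H : Bdd h M B) (hy : 0 < y) : Measurable (Uk y h) := by
  have hm : Measurable (fun p : ℝ × ℝ => h p.2 * Qk y (p.1 - p.2)) := by
    have := H.meas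
    have := (Qk_cont hy).measurable
    fun_prop
  exact hm.stronglyMeasurable.integral_prod_right'.measurable

lemma Uk_int {h : ℝ → ℝ} {M B y : ℝ} (H : Bdd h M B) (hy : 0 < y) (a b : ℝ) :
    IntegrableOn (Uk y h) (Icc a b) := by
  have i : IntegrableOn (fun x => 1 + Uk y h x ^ 2) (Icc a b) :=
    (integrableOn_const (by simp)).add (Uk_L2 H hy).1.integrableOn
  refine i.mono' (Uk_meas H hy).aestronglyMeasurable (Eventually.of_forall fun x => ?_)
  rw [Real.norm_eq_abs, ← sq_abs]
  nlinarith [sq_nonneg (|Uk y h x| - 1), abs_nonneg (Uk y h x)]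

/-- local L1 bound -/
lemma Uk_L1 {h : ℝ → ℝ} {M B y a b : ℝ} (H : Bdd h M B) (hM : 0 < M) (hy : 0 < y) (hab : a ≤ b) :
    ∫ x in Icc a b, |Uk y h x| ≤ ((b - a) / 2 + π ^ 2 * B) * M := by
  have i : IntegrableOn (fun x => M / 2 + Uk y h x ^ 2 / (2 * M)) (Icc a b) :=
    (integrableOn_const (by simp)).add ((Uk_L2 H hy).1.integrableOn.div_const _)
  have h1 : ∫ x in Icc a b, |Uk y h x| ≤ ∫ x in Icc a b, (M / 2 + Uk y h x ^ 2 / (2 * M)) := by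
    refine integral_mono (Uk_int H hy a b).abs i (fun x => ?_)
    have := sq_nonneg (|Uk y h x| - M)
    simp only
    rw [← sq_abs (Uk y h x), div_add_div _ _ (by norm_num) (by positivity),
      le_div_iff₀ (by positivity)]
    nlinarith
  refine h1.trans ?_
  have ic : Integrable (fun _ : ℝ => M / 2) (volume.restrict (Icc a b)) := integrableOn_const (by simp)
  rw [integral_add ic ((Uk_L2 H hy).1.integrableOn.div_const _),
    integral_div (2 * M)]
  have h2 : ∫ x in Icc a b, Uk y h x ^ 2 ≤ ∫ x, Uk y h x ^ 2 :=
    setIntegral_le_integral (Uk_L2 H hy).1 (Eventually.of_forall fun x => sq_nonneg _)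
  have h3 := h2.trans (Uk_L2 H hy).2
  have h4 : (∫ x in Icc a b, Uk y h x ^ 2) / (2 * M) ≤ π ^ 2 * B * M := by
    rw [div_le_iff₀ (by positivity)]
    nlinarith
  have h5 : ∫ x in Icc a b, M / 2 = (b - a) / 2 * M := by
    simp [Real.volume_real_Icc, max_eq_left (sub_nonneg.2 hab)]
    ring
  rw [h5]
  linarith

lemma Bdd.mul_int {h F : ℝ → ℝ} {M B : ℝ} (H : Bdd h M B) (hF : IntegrableOn F (Icc (-B) B)) :
    Integrable (fun t => h t * F t) := by
  have h1 : IntegrableOn (fun t => h t * F t) (Icc (-B) B) :=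
    Integrable.bdd_mul (c := M) hF H.meas.aestronglyMeasurable (Eventually.of_forall H.bd)
  refine (integrableOn_iff_integrable_of_support_subset ?_).1 h1
  intro t ht
  by_contra hc
  apply ht
  have : h t = 0 := H.supp t (by
    by_contra h2
    exact hc (abs_le.1 (not_lt.1 h2)))
  simp [this]

lemma log_intOn (x a b : ℝ) : IntegrableOn (fun t => Real.log (x - t)) (Icc a b) := by
  rcases le_total a b with hab | hab
  · have : IntervalIntegrable (fun t => Real.log (x - t)) volume a b := by
      have h := (intervalIntegral.intervalIntegrable_log' (a := x - a) (b := x - b)).comp_sub_left x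
      simpa using h
    rwa [intervalIntegrable_iff_integrableOn_Icc_of_le hab] at this
  · have : (Icc a b).Subsingleton := by
      intro u hu v hv
      have := hu.1; have := hu.2; have := hv.1; have := hv.2
      linarith
    rcases this.eq_empty_or_singleton with h | ⟨c, h⟩ <;> simp [h]

lemma Bdd.log_int {h : ℝ → ℝ} {M B : ℝ} (H : Bdd h M B) (x : ℝ) :
    Integrable (fun t => h t * Real.log (x - t)) := H.mul_int (log_intOn x _ _)

def Lk (h : ℝ → ℝ) (x : ℝ) : ℝ := ∫ t, h t * Real.log (x - t)

lemma Qk_prim {y : ℝ} (hy : 0 < y) (t a b : ℝ) :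
    ∫ z in a..b, Qk y (z - t) =
      (Real.log ((b - t) ^ 2 + y ^ 2) - Real.log ((a - t) ^ 2 + y ^ 2)) / 2 := by
  have hd : ∀ x ∈ uIcc a b, HasDerivAt (fun x => Real.log ((x - t) ^ 2 + y ^ 2) / 2)
      (Qk y (x - t)) x := by
    intro x _
    have h := den_pos hy (x - t)
    have h1 : HasDerivAt (fun x : ℝ => x - t) 1 x := (hasDerivAt_id x).sub_const t
    have h2 := (((h1.pow 2).add_const (y ^ 2)).log h.ne').div_const 2
    refine h2.congr_deriv ?_
    unfold Qk
    simp
    field_simp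
  rw [intervalIntegral.integral_eq_sub_of_hasDerivAt hd]
  · ring
  · exact ((Qk_cont hy).comp (continuous_id.sub continuous_const)).intervalIntegrable _ _

lemma Uk_prim {h : ℝ → ℝ} {M B y : ℝ} (H : Bdd h M B) (hy : 0 < y) {a b : ℝ} (hab : a ≤ b) :
    ∫ z in a..b, Uk y h z = ∫ t, h t *
      ((Real.log ((b - t) ^ 2 + y ^ 2) - Real.log ((a - t) ^ 2 + y ^ 2)) / 2) := by
  simp_rw [← Qk_prim hy]
  rw [intervalIntegral.integral_of_le hab]
  unfold Uk
  rw [integral_integral_swap]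
  · simp_rw [integral_const_mul, intervalIntegral.integral_of_le hab]
  · have i1 : Integrable (fun p : ℝ × ℝ => (1:ℝ) * h p.2)
        ((volume.restrict (Ioc a b)).prod volume) :=
      Integrable.mul_prod (f := fun _ => (1:ℝ)) (integrable_const _) H.integrable
    have i2 := i1.mul_bdd (c := 1 / y) (f := fun p : ℝ × ℝ => (1:ℝ) * h p.2)
      (g := fun p : ℝ × ℝ => Qk y (p.1 - p.2))
      ((Qk_cont hy).comp (continuous_fst.sub continuous_snd)).aestronglyMeasurable
      (Eventually.of_forall fun t => Qk_le hy _)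
    simpa [Function.uncurry_def] using i2

lemma log_sq_bound {v y : ℝ} (hv : v ≠ 0) (hy : 0 < y) (hy1 : y ≤ 1) :
    |Real.log (v ^ 2 + y ^ 2)| ≤ 2 * |Real.log v| + v ^ 2 := by
  have hv2 : 0 < v ^ 2 := by positivity
  have h1 : Real.log (v ^ 2) ≤ Real.log (v ^ 2 + y ^ 2) := Real.log_le_log hv2 (by nlinarith)
  have h2 : Real.log (v ^ 2 + y ^ 2) ≤ v ^ 2 + y ^ 2 - 1 := Real.log_le_sub_one_of_pos (by positivity)
  have h3 : Real.log (v ^ 2) = 2 * Real.log v := by rw [Real.log_pow]; norm_num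
  rw [h3] at h1
  have h4 := neg_abs_le (Real.log v)
  have h5 := abs_nonneg (Real.log v)
  rw [abs_le]
  constructor <;> nlinarith

lemma ae_ne' (a : ℝ) : ∀ᵐ t : ℝ, t ≠ a := by simp [ae_iff]

lemma Lk_lim {h : ℝ → ℝ} {M B : ℝ} (H : Bdd h M B) {a b : ℝ} (hab : a ≤ b) :
    Tendsto (fun n : ℕ => ∫ z in a..b, Uk (1 / ((n:ℝ) + 1)) h z) atTop
      (nhds (Lk h b - Lk h a)) := by
  have e : Lk h b - Lk h a = ∫ t, h t * ((Real.log ((b - t) ^ 2 + 0 ^ 2)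
      - Real.log ((a - t) ^ 2 + 0 ^ 2)) / 2) := by
    unfold Lk
    rw [← integral_sub (H.log_int b) (H.log_int a)]
    refine integral_congr_ae (Eventually.of_forall fun t => ?_)
    simp
    ring
  have e2 : ∀ n : ℕ, ∫ z in a..b, Uk (1 / ((n:ℝ) + 1)) h z = _ :=
    fun n => Uk_prim H (by positivity) hab
  simp_rw [e2]
  rw [e]
  let G : ℝ → ℝ → ℝ := fun x t => 2 * |Real.log (x - t)| + (x - t) ^ 2
  have hG : ∀ x, IntegrableOn (G x) (Icc (-B) B) := fun x => by
    refine ((log_intOn x _ _).abs.const_mul 2).add ?_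
    exact Continuous.integrableOn_Icc (by fun_prop)
  have hb : Integrable (fun t => |h t * (G b t + G a t)|) := (H.mul_int ((hG b).add (hG a))).abs
  refine tendsto_integral_of_dominated_convergence _ (fun n => ?_) hb (fun n => ?_) ?_
  · have := H.meas
    have hm : Measurable (fun t => h t * ((Real.log ((b - t) ^ 2 + (1 / ((n:ℝ) + 1)) ^ 2)
      - Real.log ((a - t) ^ 2 + (1 / ((n:ℝ) + 1)) ^ 2)) / 2)) := by fun_prop
    exact hm.aestronglyMeasurable
  · filter_upwards [ae_ne' a, ae_ne' b] with t hta htb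
    have hy : (0:ℝ) < 1 / ((n:ℝ) + 1) := by positivity
    have hy1 : 1 / ((n:ℝ) + 1) ≤ 1 := by
      rw [div_le_one (by positivity)]; linarith [(Nat.cast_nonneg n : (0:ℝ) ≤ n)]
    have h1 := log_sq_bound (sub_ne_zero.2 htb.symm) hy hy1
    have h2 := log_sq_bound (sub_ne_zero.2 hta.symm) hy hy1
    rw [Real.norm_eq_abs, abs_mul, abs_mul]
    refine mul_le_mul_of_nonneg_left ?_ (abs_nonneg _)
    have g1 : 0 ≤ G b t := by positivity
    have g2 : 0 ≤ G a t := by positivity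
    rw [abs_of_nonneg (add_nonneg g1 g2), abs_div, abs_of_pos (by norm_num : (0:ℝ) < 2)]
    have := abs_sub (Real.log ((b - t) ^ 2 + (1 / ((n:ℝ) + 1)) ^ 2))
      (Real.log ((a - t) ^ 2 + (1 / ((n:ℝ) + 1)) ^ 2))
    simp only [G] at *
    linarith
  · filter_upwards [ae_ne' a, ae_ne' b] with t hta htb
    have h0 := tendsto_one_div_add_atTop_nhds_zero_nat (𝕜 := ℝ)
    have l : ∀ x, t ≠ x → Tendsto (fun n : ℕ => Real.log ((x - t) ^ 2 + (1 / ((n:ℝ) + 1)) ^ 2))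
        atTop (nhds (Real.log ((x - t) ^ 2 + 0 ^ 2))) := fun x hx => by
      have : x - t ≠ 0 := sub_ne_zero.2 hx.symm
      exact ((h0.pow 2).const_add _).log (by positivity)
    exact (((l b htb).sub (l a hta)).div_const 2).const_mul _

lemma Lk_ae_diff {h : ℝ → ℝ} {M B : ℝ} (H : Bdd h M B) (hM : 0 < M) :
    ∀ᵐ x, DifferentiableAt ℝ (Lk h) x := by
  apply LocallyBoundedVariationOn.ae_differentiableAt
  intro a b _ _
  rw [univ_inter]
  unfold BoundedVariationOn
  by_cases hab : a ≤ b
  swap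
  · rw [Icc_eq_empty hab]; simp
  have key : eVariationOn (Lk h) (Icc a b) ≤ ENNReal.ofReal (((b - a) / 2 + π ^ 2 * B) * M) := by
    unfold eVariationOn
    refine iSup_le ?_
    rintro ⟨N, u, hu, hmem⟩
    simp only [edist_dist, Real.dist_eq]
    rw [← ENNReal.ofReal_sum_of_nonneg (fun _ _ => abs_nonneg _)]
    apply ENNReal.ofReal_le_ofReal
    have lim := tendsto_finsetSum (Finset.range N) (fun i _ => 
      (Lk_lim H (hu (Nat.le_succ i))).abs)
    refine le_of_tendsto' lim (fun n => ?_)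
    have hy : (0:ℝ) < 1 / ((n:ℝ) + 1) := by positivity
    refine le_trans ?_ (Uk_L1 H hM hy hab)
    have ii : ∀ c d : ℝ, IntervalIntegrable (fun z => |Uk (1 / ((n:ℝ) + 1)) h z|) volume c d := by
      intro c d
      rw [intervalIntegrable_iff]
      exact (((Uk_int H hy _ _).mono_set Ioc_subset_Icc_self).abs : _)
    calc _ ≤ ∑ i ∈ Finset.range N, ∫ z in (u i)..(u (i+1)), |Uk (1 / ((n:ℝ) + 1)) h z| :=
          Finset.sum_le_sum fun i _ => intervalIntegral.abs_integral_le_integral_abs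
            (hu (Nat.le_succ i))
      _ = ∫ z in (u 0)..(u N), |Uk (1 / ((n:ℝ) + 1)) h z| :=
          intervalIntegral.sum_integral_adjacent_intervals (fun k _ => ii _ _)
      _ ≤ _ := by
          rw [intervalIntegral.integral_of_le (hu (Nat.zero_le N))]
          refine setIntegral_mono_set (Uk_int H hy a b).abs 
            (Eventually.of_forall fun _ => abs_nonneg _) ?_
          refine Eventually.of_forall (fun z (hz : z ∈ Ioc _ _) => ?_)
          exact ⟨(hmem 0).1.trans hz.1.le, hz.2.trans (hmem N).2⟩
  exact ne_top_of_le_ne_top ENNReal.ofReal_ne_top key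

/-- difference kernel -/
def kk (u : ℝ) : ℝ := (Real.log (u + 1) - Real.log (u - 1)) / 2 -
  {u : ℝ | 1 < |u|}.indicator (fun u => u⁻¹) u

lemma kk_meas : Measurable kk := by
  unfold kk
  have : Measurable ({u : ℝ | 1 < |u|}.indicator (fun u : ℝ => u⁻¹)) :=
    measurable_inv.indicator (measurableSet_lt measurable_const (by fun_prop))
  fun_prop

lemma kk_odd (u : ℝ) : kk (-u) = - kk u := by
  have e1 : Real.log (-u + 1) = Real.log (u - 1) := by rw [← Real.log_neg_eq_log]; ring_nf
  have e2 : Real.log (-u - 1) = Real.log (u + 1) := by rw [← Real.log_neg_eq_log]; ring_nf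
  unfold kk
  rw [e1, e2]
  simp only [indicator, mem_setOf_eq, abs_neg]
  split_ifs
  · rw [inv_neg]; ring
  · ring

lemma kk_tail {u : ℝ} (hu : 2 < |u|) : |kk u| ≤ 4 * (1 + u ^ 2)⁻¹ := by
  have hu0 : u ≠ 0 := by rintro rfl; simp at hu; linarith
  have hu1 : u + 1 ≠ 0 := by
    intro h; rw [show u = -1 by linarith] at hu; norm_num at hu
  have hu2 : u - 1 ≠ 0 := by
    intro h; rw [show u = 1 by linarith] at hu; norm_num at hu
  have hmem : u ∈ {u : ℝ | 1 < |u|} := by simp; linarith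
  have hv : |u⁻¹| < 1 / 2 := by
    rw [abs_inv, inv_lt_comm₀ (by positivity) (by norm_num)]; simpa using hu
  have hv' : |-u⁻¹| < 1 / 2 := by rwa [abs_neg]
  have b1 := Real.abs_log_sub_add_sum_range_le (x := u⁻¹) (by linarith) 1
  have b2 := Real.abs_log_sub_add_sum_range_le (x := -u⁻¹) (by linarith) 1
  simp only [Finset.sum_range_one, zero_add, pow_one, Nat.cast_zero, div_one] at b1 b2
  have l1 : Real.log (u + 1) = Real.log u + Real.log (1 - -u⁻¹) := by
    rw [← Real.log_mul hu0]
    · congr 1; field_simp; ring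
    · intro h; apply hu1; field_simp at h; linarith
  have l2 : Real.log (u - 1) = Real.log u + Real.log (1 - u⁻¹) := by
    rw [← Real.log_mul hu0]
    · congr 1; field_simp
    · intro h; apply hu2; field_simp at h; linarith
  have bb : |u⁻¹| ^ (1 + 1) / (1 - |u⁻¹|) ≤ 2 * (u⁻¹) ^ 2 := by
    rw [div_le_iff₀ (by linarith)]
    rw [show (1 + 1) = 2 from rfl, sq_abs]
    nlinarith [sq_nonneg (u⁻¹)]
  rw [abs_neg] at b2
  have b1' := abs_le.1 (b1.trans bb)
  have b2' := abs_le.1 (b2.trans bb)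
  have fin : |kk u| ≤ 2 * (u⁻¹) ^ 2 := by
    unfold kk
    rw [indicator_of_mem hmem, l1, l2, abs_le]
    constructor <;> linarith [b1'.1, b1'.2, b2'.1, b2'.2]
  refine fin.trans ?_
  have : 4 < u ^ 2 := by rw [← sq_abs]; nlinarith
  rw [inv_pow, ← div_eq_mul_inv, ← div_eq_mul_inv, div_le_div_iff₀ (by positivity) (by positivity)]
  nlinarith

lemma kk_int : Integrable kk := by
  rw [← integrableOn_univ, ← union_compl_self (Icc (-2:ℝ) 2)]
  refine IntegrableOn.union ?_ ?_
  · unfold kk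
    refine Integrable.sub (Integrable.div_const (Integrable.sub ?_ ?_) _) ?_
    · have h := (intervalIntegral.intervalIntegrable_log' (a := -2 + 1) (b := 2 + 1)).comp_add_right 1
      have h' : IntervalIntegrable (fun x => Real.log (x + 1)) volume (-2) 2 := by simpa using h
      rwa [intervalIntegrable_iff_integrableOn_Icc_of_le (by norm_num)] at h'
    · have h := (intervalIntegral.intervalIntegrable_log' (a := -2 - 1) (b := 2 - 1)).comp_sub_right 1
      have h' : IntervalIntegrable (fun x => Real.log (x - 1)) volume (-2) 2 := by simpa using h
      rwa [intervalIntegrable_iff_integrableOn_Icc_of_le (by norm_num)] at h'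
    · have ic : Integrable (fun _ : ℝ => (1:ℝ)) (volume.restrict (Icc (-2:ℝ) 2)) :=
        integrableOn_const (by simp)
      refine ic.mono' (Measurable.aestronglyMeasurable ?_) (Eventually.of_forall fun u => ?_)
      · exact measurable_inv.indicator (measurableSet_lt measurable_const (by fun_prop))
      · simp only [indicator, mem_setOf_eq]
        split_ifs with hu
        · rw [norm_inv, Real.norm_eq_abs]
          exact inv_le_one_of_one_le₀ hu.le
        · simp
  · refine ((integrable_inv_one_add_sq.const_mul 4).integrableOn).mono' 
      kk_meas.aestronglyMeasurable ?_
    rw [ae_restrict_iff' measurableSet_Icc.compl]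
    refine Eventually.of_forall fun u hu => kk_tail ?_
    by_contra hc
    exact hu (abs_le.1 (not_lt.1 hc))

lemma kk_integral : ∫ u, kk u = 0 := by
  have h := integral_neg_eq_self kk volume
  simp_rw [kk_odd, integral_neg] at h
  linarith

def Htr (r : ℝ) (h : ℝ → ℝ) (x : ℝ) : ℝ := ∫ β in {β : ℝ | r < |x - β|}, h β * (x - β)⁻¹

lemma meas_tr (r x : ℝ) : MeasurableSet {β : ℝ | r < |x - β|} :=
  measurableSet_lt measurable_const (by fun_prop)

lemma Bdd.inv_int {h : ℝ → ℝ} {M B r : ℝ} (H : Bdd h M B) (hr : 0 < r) (x : ℝ) :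
    Integrable ({β : ℝ | r < |x - β|}.indicator (fun β => h β * (x - β)⁻¹)) := by
  have hm : Measurable ({β : ℝ | r < |x - β|}.indicator (fun β => (x - β)⁻¹)) :=
    Measurable.indicator (by fun_prop) (meas_tr r x)
  have := H.integrable.mul_bdd (c := r⁻¹) hm.aestronglyMeasurable
    (Eventually.of_forall fun β => by
      simp only [indicator, mem_setOf_eq]
      split_ifs with hb
      · rw [norm_inv, Real.norm_eq_abs]
        exact inv_anti₀ hr hb.le
      · simp; positivity)
  refine this.congr (Eventually.of_forall fun β => ?_)
  simp only [indicator, mem_setOf_eq]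
  split_ifs <;> simp

lemma Htr_eq {h : ℝ → ℝ} {M B r : ℝ} (H : Bdd h M B) (hr : 0 < r) (x : ℝ) :
    Htr r h x = (Lk h (x + r) - Lk h (x - r)) / (2 * r) - ∫ u, h (x - r * u) * kk u := by
  have e1 : ∫ u, h (x - r * u) * kk u = ∫ t, r⁻¹ * (h t * kk ((x - t) / r)) := by
    have := Measure.integral_comp_mul_left (fun v => h (x - v) * kk (v / r)) r
    have e0 : ∀ u, h (x - r * u) * kk (r * u / r) = h (x - r * u) * kk u := fun u => by
      rw [mul_div_cancel_left₀ _ hr.ne']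
    simp_rw [e0] at this
    rw [this, abs_of_pos (by positivity), smul_eq_mul, integral_const_mul]
    congr 1
    have := integral_sub_left_eq_self (fun t => h t * kk ((x - t) / r)) volume x
    simpa using this
  have e2 : Htr r h x = ∫ β, {β : ℝ | r < |x - β|}.indicator (fun β => h β * (x - β)⁻¹) β :=
    (integral_indicator (meas_tr r x)).symm
  have e3 : (Lk h (x + r) - Lk h (x - r)) / (2 * r) = ∫ t, (h t * Real.log (x + r - t)
      - h t * Real.log (x - r - t)) / (2 * r) := by
    unfold Lk
    rw [integral_div, integral_sub (H.log_int _) (H.log_int _)]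
  have i3 : Integrable (fun t => (h t * Real.log (x + r - t)
      - h t * Real.log (x - r - t)) / (2 * r)) := ((H.log_int _).sub (H.log_int _)).div_const _
  have e4 : ∫ t, r⁻¹ * (h t * kk ((x - t) / r)) = ∫ t, ((h t * Real.log (x + r - t)
      - h t * Real.log (x - r - t)) / (2 * r) - 
      {β : ℝ | r < |x - β|}.indicator (fun β => h β * (x - β)⁻¹) t) := by
    refine integral_congr_ae ?_
    filter_upwards [ae_ne' (x + r), ae_ne' (x - r)] with t h1 h2
    have l1 : Real.log ((x - t) / r + 1) = Real.log (x + r - t) - Real.log r := by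
      rw [← Real.log_div (fun hc => h1 (by linarith)) hr.ne']
      congr 1; field_simp; ring
    have l2 : Real.log ((x - t) / r - 1) = Real.log (x - r - t) - Real.log r := by
      rw [← Real.log_div (fun hc => h2 (by linarith)) hr.ne']
      congr 1; field_simp; ring
    have c : 1 < |(x - t) / r| ↔ r < |x - t| := by
      rw [abs_div, abs_of_pos hr, one_lt_div hr]
    unfold kk
    rw [l1, l2]
    simp only [indicator, mem_setOf_eq, c]
    split_ifs
    · field_simp; ring
    · field_simp; ring
  rw [e1, e4, integral_sub i3 (H.inv_int hr x), ← e3, ← e2]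
  ring

lemma kk_conv {h : ℝ → ℝ} {M B : ℝ} (H : Bdd h M B) :
    ∀ᵐ x, Tendsto (fun r => ∫ u, h (x - r * u) * kk u) (nhdsWithin 0 (Ioi 0)) (nhds 0) := by
  have hloc : LocallyIntegrable h := H.integrable.locallyIntegrable
  filter_upwards [IsUnifLocDoublingMeasure.ae_tendsto_average_norm_sub volume hloc 1] with x hx
  have hM := H.M_nonneg
  rw [Metric.tendsto_nhds]
  intro η hη
  obtain ⟨g, hgc, hgi, hgcont, hgint⟩ := kk_int.exists_hasCompactSupport_integral_sub_le
    (ε := η / (4 * M + 4)) (by positivity)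
  obtain ⟨R, hRpos, hR⟩ : ∃ R : ℝ, 0 < R ∧ ∀ u, R < |u| → g u = 0 := by
    obtain ⟨R, hR⟩ := hgc.isCompact.isBounded.subset_closedBall 0
    refine ⟨max R 1, by positivity, fun u hu => ?_⟩
    by_contra hc
    have := hR (subset_tsupport g hc)
    simp at this
    have := le_max_left R 1
    linarith
  obtain ⟨K, hK⟩ : ∃ K, ∀ u, |g u| ≤ K := by
    obtain ⟨K, hK⟩ := hgc.exists_bound_of_continuous hgcont
    exact ⟨K, hK⟩
  have hK0 : 0 ≤ K := (abs_nonneg _).trans (hK 0)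
  have hlim := hx (l := nhdsWithin (0:ℝ) (Ioi 0)) (fun _ => x) (fun r => R * r)
    (by
      refine tendsto_nhdsWithin_iff.2 ⟨?_, ?_⟩
      · have : Tendsto (fun r : ℝ => R * r) (nhds 0) (nhds (R * 0)) := tendsto_id.const_mul R
        rw [mul_zero] at this
        exact this.mono_left nhdsWithin_le_nhds
      · filter_upwards [self_mem_nhdsWithin] with r hr
        exact mul_pos hRpos hr)
    (by
      filter_upwards [self_mem_nhdsWithin] with r hr
      simp only [Metric.mem_closedBall, dist_self, one_mul]
      exact (mul_pos hRpos hr).le)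
  rw [Metric.tendsto_nhds] at hlim
  have hev := hlim (η / (4 * (K + 1) * R)) (by positivity)
  filter_upwards [hev, self_mem_nhdsWithin] with r hr hr0
  have hr0 : 0 < r := hr0
  rw [Real.dist_eq, sub_zero] at hr ⊢
  have hhm : Measurable (fun u => h (x - r * u) - h x) := by
    have := H.meas
    fun_prop
  have hhb : ∀ u, |h (x - r * u) - h x| ≤ 2 * M := fun u => by
    have := abs_sub (h (x - r * u)) (h x)
    linarith [H.bd (x - r * u), H.bd x]
  have ik : Integrable (fun u => (h (x - r * u) - h x) * kk u) :=
    kk_int.bdd_mul (c := 2 * M) hhm.aestronglyMeasurable (Eventually.of_forall hhb)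
  have e0 : ∫ u, h (x - r * u) * kk u = ∫ u, (h (x - r * u) - h x) * kk u := by
    have : ∀ u, h (x - r * u) * kk u = (h (x - r * u) - h x) * kk u + h x * kk u := fun u => by ring
    simp_rw [this]
    rw [integral_add ik (kk_int.const_mul _), integral_const_mul, kk_integral]
    ring
  rw [e0]
  have idx : Integrable (fun u => 2 * M * |kk u - g u|) := (kk_int.sub hgint).abs.const_mul _
  have iind : Integrable ((Metric.closedBall (0:ℝ) R).indicator (fun u => |h (x - r * u) - h x|)) := by
    rw [integrable_indicator_iff Metric.isClosed_closedBall.measurableSet]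
    refine Integrable.mono' (g := fun _ => 2 * M) (integrableOn_const
      measure_closedBall_lt_top.ne) hhm.abs.aestronglyMeasurable (Eventually.of_forall fun u => ?_)
    simpa using hhb u
  have hle : |∫ u, (h (x - r * u) - h x) * kk u| ≤ ∫ u, (2 * M * |kk u - g u| + 
      K * (Metric.closedBall (0:ℝ) R).indicator (fun u => |h (x - r * u) - h x|) u) := by
    refine (abs_integral_le_integral_abs).trans (integral_mono ik.abs (idx.add (iind.const_mul K)) ?_)
    intro u
    simp only [Pi.add_apply]
    have : (h (x - r * u) - h x) * kk u = (h (x - r * u) - h x) * (kk u - g u)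
      + (h (x - r * u) - h x) * g u := by ring
    rw [this]
    refine (abs_add_le _ _).trans (add_le_add ?_ ?_)
    · rw [abs_mul]; exact mul_le_mul_of_nonneg_right (hhb u) (abs_nonneg _)
    · by_cases hu : u ∈ Metric.closedBall (0:ℝ) R
      · rw [indicator_of_mem hu, abs_mul, mul_comm]
        exact mul_le_mul_of_nonneg_right (hK u) (abs_nonneg _)
      · rw [indicator_of_notMem hu, hR u (by simpa using hu)]; simp
  refine lt_of_le_of_lt hle ?_
  rw [integral_add idx (iind.const_mul K), integral_const_mul, integral_const_mul]
  have b1 : 2 * M * ∫ u, |kk u - g u| ≤ η / 2 := by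
    have : 2 * M * ∫ u, |kk u - g u| ≤ 2 * M * (η / (4 * M + 4)) :=
      mul_le_mul_of_nonneg_left hgi (by positivity)
    refine this.trans ?_
    rw [← mul_div_assoc, div_le_div_iff₀ (by positivity) (by norm_num)]
    nlinarith
  have b2 : ∫ u, (Metric.closedBall (0:ℝ) R).indicator (fun u => |h (x - r * u) - h x|) u
      = 2 * R * ⨍ y in Metric.closedBall x (R * r), ‖h y - h x‖ := by
    have c1 := Measure.integral_comp_mul_left (fun v => (Metric.closedBall x (R * r)).indicator
      (fun y => ‖h y - h x‖) (x - v)) r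
    have c2 := integral_sub_left_eq_self (fun v => (Metric.closedBall x (R * r)).indicator
      (fun y => ‖h y - h x‖) v) volume x
    rw [c2, integral_indicator Metric.isClosed_closedBall.measurableSet] at c1
    rw [setAverage_eq, measureReal_def, Real.volume_closedBall, 
      ENNReal.toReal_ofReal (by positivity)]
    have c3 : ∀ u, (Metric.closedBall (0:ℝ) R).indicator (fun u => |h (x - r * u) - h x|) u =
        (Metric.closedBall x (R * r)).indicator (fun y => ‖h y - h x‖) (x - r * u) := by
      intro u
      have : u ∈ Metric.closedBall (0:ℝ) R ↔ x - r * u ∈ Metric.closedBall x (R * r) := by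
        simp only [Metric.mem_closedBall, Real.dist_eq, sub_zero]
        rw [show x - r * u - x = -(r * u) by ring, abs_neg, abs_mul, abs_of_pos hr0, mul_comm R,
          mul_le_mul_iff_right₀ hr0]
      by_cases hu : u ∈ Metric.closedBall (0:ℝ) R
      · rw [indicator_of_mem hu, indicator_of_mem (this.1 hu), Real.norm_eq_abs]
      · rw [indicator_of_notMem hu, indicator_of_notMem (fun h => hu (this.2 h))]
    simp_rw [c3]
    rw [c1, abs_of_pos (by positivity), smul_eq_mul, smul_eq_mul]
    field_simp
  have b3 : K * (2 * R * ⨍ y in Metric.closedBall x (R * r), ‖h y - h x‖) ≤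
      K * (2 * R * (η / (4 * (K + 1) * R))) := by
    gcongr
    exact (le_abs_self _).trans hr.le
  have b4 : K * (2 * R * (η / (4 * (K + 1) * R))) < η / 2 := by
    have : K * (2 * R * (η / (4 * (K + 1) * R))) = K * η / (2 * (K + 1)) := by
      field_simp; ring
    rw [this, div_lt_div_iff₀ (by positivity) (by norm_num)]
    nlinarith
  rw [b2]
  linarith

/-- a.e. existence of the truncated Hilbert transform limit. -/
lemma Htr_ae {h : ℝ → ℝ} {M B : ℝ} (H : Bdd h M B) (hM : 0 < M) :
    ∀ᵐ x, ∃ l, Tendsto (fun r => Htr r h x) (nhdsWithin 0 (Ioi 0)) (nhds l) := by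
  filter_upwards [kk_conv H, Lk_ae_diff H hM] with x h1 h2
  have hd := h2.hasDerivAt
  refine ⟨deriv (Lk h) x - 0, ?_⟩
  have hs := hd.tendsto_slope_zero_right
  have hs' : Tendsto (fun t : ℝ => t⁻¹ • (Lk h (x + t) - Lk h x)) (nhdsWithin 0 (Iio 0))
    (nhds (deriv (Lk h) x)) := hd.tendsto_slope_zero_left
  have hneg : Tendsto (fun r : ℝ => -r) (nhdsWithin 0 (Ioi 0)) (nhdsWithin 0 (Iio 0)) := by
    refine tendsto_nhdsWithin_iff.2 ⟨?_, ?_⟩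
    · have : Tendsto (fun r : ℝ => -r) (nhds 0) (nhds (-0)) := tendsto_id.neg
      rw [neg_zero] at this
      exact this.mono_left nhdsWithin_le_nhds
    · filter_upwards [self_mem_nhdsWithin] with r hr
      have : 0 < r := hr
      simp [this]
  have hs'' := hs'.comp hneg
  have hsum := ((hs.add hs'').div_const 2).sub h1
  have e : (deriv (Lk h) x + deriv (Lk h) x) / 2 = deriv (Lk h) x := by ring
  rw [e] at hsum
  refine hsum.congr' ?_
  filter_upwards [self_mem_nhdsWithin] with r hr
  have hr : 0 < r := hr
  rw [Htr_eq H hr]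
  congr 1
  simp only [Function.comp, smul_eq_mul]
  rw [← sub_eq_add_neg]
  field_simp
  ring

structure FF (δ A : ℝ) (f f' : ℝ → ℝ) : Prop where
  meas : Measurable f
  der : ∀ x, |x| < δ → HasDerivAt f (f' x) x
  lip : ∀ x y, |x| < δ → |y| < δ → |f' x - f' y| ≤ A * |x - y|
  f0 : f 0 = 0
  d0 : f' 0 = 0
  dpos : 0 < δ
  Apos : 0 < A

variable {δ A : ℝ} {f f' : ℝ → ℝ}

lemma FF_of {δ A : ℝ} {f : ℝ → ℝ} (hδ : 0 < δ) (hA : 0 < A) (h5 : ContDiffOn ℝ 5 f (Ioo (-δ) δ))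
    (h0 : f 0 = 0) (h1 : derivWithin f (Ioo (-δ) δ) 0 = 0)
    (hb : ∀ x ∈ Ioo (-δ) δ, ∀ i : ℕ, i ≤ 3 → |iteratedDerivWithin i f (Ioo (-δ) δ) x| ≤ A) :
    FF δ A ((Ioo (-δ) δ).indicator f) (derivWithin f (Ioo (-δ) δ)) := by
  have uD : UniqueDiffOn ℝ (Ioo (-δ) δ) := isOpen_Ioo.uniqueDiffOn
  have hd1 : ContDiffOn ℝ 1 (derivWithin f (Ioo (-δ) δ)) (Ioo (-δ) δ) :=
    h5.derivWithin uD (by norm_num)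
  refine ⟨?_, ?_, ?_, ?_, h1, hδ, hA⟩
  · rw [← Set.piecewise_eq_indicator]
    exact h5.continuousOn.measurable_piecewise continuousOn_const measurableSet_Ioo
  · intro x hx
    have hx' : x ∈ Ioo (-δ) δ := abs_lt.1 hx
    have hn : Ioo (-δ) δ ∈ nhds x := isOpen_Ioo.mem_nhds hx'
    have d := (h5.differentiableOn (by norm_num) x hx').hasDerivWithinAt.hasDerivAt hn
    refine d.congr_of_eventuallyEq ?_
    filter_upwards [hn] with y hy using indicator_of_mem hy _
  · intro x y hx hy
    have key := (convex_Ioo (-δ) δ).norm_image_sub_le_of_norm_derivWithin_le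
      (f := derivWithin f (Ioo (-δ) δ)) (C := A) (hd1.differentiableOn (by norm_num)) ?_
      (abs_lt.1 hy) (abs_lt.1 hx)
    · simpa using key
    · intro z hz
      have := hb z hz 2 (by norm_num)
      rw [iteratedDerivWithin_succ] at this
      rw [iteratedDerivWithin_one] at this
      exact this
  · rw [indicator_of_mem (by constructor <;> linarith), h0]

lemma FF.d1 (F : FF δ A f f') {x : ℝ} (hx : |x| < δ) : |f' x| ≤ A * |x| := by
  have := F.lip x 0 hx (by simpa using F.dpos)
  simpa [F.d0] using this

lemma abs_le_of_uIcc {x y z : ℝ} (hz : z ∈ uIcc x y) : |z| ≤ max |x| |y| := by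
  rcases le_total x y with h | h
  · rw [uIcc_of_le h] at hz
    exact abs_le_max_abs_abs hz.1 hz.2
  · rw [uIcc_of_ge h] at hz
    rw [max_comm]
    exact abs_le_max_abs_abs hz.1 hz.2

lemma abs_sub_le_of_uIcc {x y z : ℝ} (hz : z ∈ uIcc x y) : |x - z| ≤ |x - y| := by
  have := abs_sub_left_of_mem_uIcc hz
  rw [abs_sub_comm x z, abs_sub_comm x y]; exact this

lemma FF.d2 (F : FF δ A f f') {x y m : ℝ} (hm : m < δ) (hx : |x| ≤ m) (hy : |y| ≤ m) :
    |f x - f y| ≤ A * m * |x - y| := by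
  have hz : ∀ z ∈ uIcc x y, |z| ≤ m := fun z hz => (abs_le_of_uIcc hz).trans (max_le hx hy)
  have key := (convex_uIcc x y).norm_image_sub_le_of_norm_hasDerivWithin_le
    (f := f) (f' := f') (C := A * m)
    (fun z h => (F.der z ((hz z h).trans_lt hm)).hasDerivWithinAt)
    (fun z h => (F.d1 ((hz z h).trans_lt hm)).trans
      (mul_le_mul_of_nonneg_left (hz z h) F.Apos.le)) right_mem_uIcc left_mem_uIcc
  simpa using key

lemma FF.taylor (F : FF δ A f f') {x y : ℝ} (hx : |x| < δ) (hy : |y| < δ) :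
    |f x - f y - f' x * (x - y)| ≤ A * |x - y| ^ 2 := by
  have hz : ∀ z ∈ uIcc x y, |z| < δ := fun z hz => (abs_le_of_uIcc hz).trans_lt (max_lt hx hy)
  have key := (convex_uIcc x y).norm_image_sub_le_of_norm_hasDerivWithin_le
    (f := fun z => f z - f' x * z) (f' := fun z => f' z - f' x) (C := A * |x - y|)
    (fun z h => ((F.der z (hz z h)).sub ((hasDerivAt_id z).const_mul (f' x) |>.congr_deriv
      (mul_one _))).hasDerivWithinAt)
    (fun z h => (F.lip z x (hz z h) hx).trans
      (mul_le_mul_of_nonneg_left (by rw [abs_sub_comm]; exact abs_sub_le_of_uIcc h) F.Apos.le))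
      right_mem_uIcc left_mem_uIcc
  simp only [Real.norm_eq_abs] at key
  calc _ = |f x - f' x * x - (f y - f' x * y)| := by congr 1; ring
    _ ≤ _ := key
    _ = _ := by ring

/-- difference quotient -/
def qq (f : ℝ → ℝ) (x y : ℝ) : ℝ := (f x - f y) / (x - y)

lemma FF.q_le (F : FF δ A f f') {x y m : ℝ} (hm : m < δ) (hx : |x| ≤ m) (hy : |y| ≤ m) :
    |qq f x y| ≤ A * m := by
  unfold qq
  have hm0 : 0 ≤ m := (abs_nonneg _).trans hx
  rcases eq_or_ne x y with rfl | h
  · simp; have := F.Apos; positivity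
  · rw [abs_div, div_le_iff₀ (abs_pos.2 (sub_ne_zero.2 h))]
    exact F.d2 hm hx hy

lemma FF.q_tay (F : FF δ A f f') {x y : ℝ} (hx : |x| < δ) (hy : |y| < δ) (h : x ≠ y) :
    |qq f x y - f' x| ≤ A * |x - y| := by
  unfold qq
  have hp : 0 < |x - y| := abs_pos.2 (sub_ne_zero.2 h)
  have e : (f x - f y) / (x - y) - f' x = (f x - f y - f' x * (x - y)) / (x - y) := by
    have := sub_ne_zero.2 h
    field_simp
  rw [e, abs_div, div_le_iff₀ hp]
  have := F.taylor hx hy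
  nlinarith

lemma FF.q_diff (F : FF δ A f f') {x y : ℝ} (hx : |x| < δ) (hy : |y| < δ) (h : |x| < |y|) :
    |qq f x y - qq f 0 y| ≤ A * |x| := by
  have hz : ∀ z ∈ uIcc 0 x, |z| < |y| := fun z hz => (abs_le_of_uIcc hz).trans_lt
    (max_lt (by simpa using (abs_nonneg x).trans_lt h) h)
  have hne : ∀ z ∈ uIcc 0 x, z - y ≠ 0 := by
    intro z h1 h2
    have := hz z h1
    rw [sub_eq_zero.1 h2] at this; exact lt_irrefl _ this
  have key := (convex_uIcc 0 x).norm_image_sub_le_of_norm_hasDerivWithin_le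
    (f := fun z => qq f z y) (f' := fun z => (f' z * (z - y) - (f z - f y) * 1) / (z - y) ^ 2)
    (C := A)
    (fun z h => (((F.der z ((hz z h).trans hy)).sub_const (f y)).div
      ((hasDerivAt_id z).sub_const y) (hne z h)).hasDerivWithinAt) ?_ left_mem_uIcc right_mem_uIcc
  · simpa using key
  · intro z h
    have t := F.taylor ((hz z h).trans hy) hy
    have := hne z h
    rw [Real.norm_eq_abs, abs_div, abs_of_nonneg (sq_nonneg (z - y)), div_le_iff₀ (by positivity)]
    rw [sq_abs] at t
    rw [← abs_neg]
    calc _ = |f z - f y - f' z * (z - y)| := by congr 1; ring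
      _ ≤ _ := t

/-- `q/(1+q²)` -/
def bb (q : ℝ) : ℝ := q / (1 + q ^ 2)

lemma bb_lip (p q : ℝ) : |bb p - bb q| ≤ |p - q| := by
  unfold bb
  have e : p / (1 + p ^ 2) - q / (1 + q ^ 2) = (p - q) * ((1 - p * q) / ((1 + p ^ 2) * (1 + q ^ 2))) := by
    field_simp; ring
  rw [e, abs_mul]
  refine mul_le_of_le_one_right (abs_nonneg _) ?_
  rw [abs_div, abs_of_pos (a := (1 + p ^ 2) * (1 + q ^ 2)) (by positivity), div_le_one (by positivity)]
  rw [abs_le]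
  constructor <;> nlinarith [sq_nonneg (p - q), sq_nonneg (p + q), sq_nonneg (p * q)]

lemma bb_le (p : ℝ) : |bb p| ≤ |p| := by
  have := bb_lip p 0
  simpa [bb] using this

/-- the kernel of `T_1` -/
def kT (f : ℝ → ℝ) (α β : ℝ) : ℝ := (f α - f β) / ((α - β) ^ 2 + (f α - f β) ^ 2)

lemma kT_eq (f : ℝ → ℝ) (α β : ℝ) : kT f α β = bb (qq f α β) / (α - β) := by
  unfold kT bb qq
  rcases eq_or_ne α β with rfl | h
  · simp
  · have := sub_ne_zero.2 h
    field_simp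

lemma FF.k0 (F : FF δ A f f') {β : ℝ} (hβ : |β| < δ) : |kT f 0 β| ≤ A := by
  rw [kT_eq, zero_sub, abs_div, abs_neg]
  rcases eq_or_ne β 0 with rfl | h
  · simp [F.Apos.le]
  rw [div_le_iff₀ (abs_pos.2 h)]
  refine (bb_le _).trans (F.q_le hβ (by simp) le_rfl)

lemma FF.k1 (F : FF δ A f f') {α β : ℝ} (hα : |α| < δ) (hβ : |β| < δ) :
    |kT f α β - bb (f' α) / (α - β)| ≤ A := by
  rw [kT_eq, ← sub_div, abs_div]
  rcases eq_or_ne α β with rfl | h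
  · simp [F.Apos.le]
  rw [div_le_iff₀ (abs_pos.2 (sub_ne_zero.2 h))]
  exact (bb_lip _ _).trans (F.q_tay hα hβ h)

lemma FF.k2 (F : FF δ A f f') {α β : ℝ} (hα : 2 * |α| ≤ |β|) (hβ : |β| < δ) (hβ0 : 0 < |β|) :
    |kT f α β - kT f 0 β| ≤ 4 * A * |α| / |β| := by
  have hαδ : |α| < δ := by linarith [abs_nonneg α]
  have hne : β ≠ 0 := abs_pos.1 hβ0
  have h2 : |β| / 2 ≤ |α - β| := by
    have := abs_sub_abs_le_abs_sub β α
    rw [abs_sub_comm α β]; linarith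
  have hne2 : α - β ≠ 0 := abs_pos.1 (by linarith)
  have e : kT f α β - kT f 0 β = (bb (qq f α β) - bb (qq f 0 β)) / (α - β)
      + bb (qq f 0 β) * α * (-1) / ((-β) * (α - β)) * (-1) * (-1) := by
    rw [kT_eq, kT_eq, zero_sub]
    field_simp
    ring
  rw [e]
  have hp : 0 < |α - β| := abs_pos.2 hne2
  have b1 : |(bb (qq f α β) - bb (qq f 0 β)) / (α - β)| ≤ 2 * A * |α| / |β| := by
    rw [abs_div, div_le_div_iff₀ hp hβ0]
    have := (bb_lip (qq f α β) (qq f 0 β)).trans (F.q_diff hαδ hβ (by linarith [abs_nonneg α]))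
    calc _ ≤ (A * |α|) * |β| := by gcongr
      _ ≤ (A * |α|) * (2 * |α - β|) := by
        have := F.Apos
        gcongr; linarith
      _ = _ := by ring
  have b2 : |bb (qq f 0 β) * α * (-1) / ((-β) * (α - β)) * (-1) * (-1)| ≤ 2 * A * |α| / |β| := by
    have e2 : |bb (qq f 0 β) * α * (-1) / ((-β) * (α - β)) * (-1) * (-1)| =
      |bb (qq f 0 β)| * |α| / (|β| * |α - β|) := by
      simp [abs_mul, abs_div]
    rw [e2, div_le_div_iff₀ (by positivity) hβ0]
    have := (bb_le _).trans (F.q_le (x := 0) hβ (by simp) le_rfl : |qq f 0 β| ≤ A * |β|)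
    calc _ ≤ (A * |β|) * |α| * |β| := by gcongr
      _ ≤ (A * |β|) * |α| * (2 * |α - β|) := by
        have := F.Apos
        gcongr; linarith
      _ = _ := by ring
  calc _ ≤ _ := abs_add_le _ _
    _ ≤ _ := add_le_add b1 b2
    _ = _ := by ring

lemma cut_lip {ψ : ℝ → ℝ} (hψ : IsCutoff ψ) : ∃ L : ℝ, 0 < L ∧ ∀ x y, |ψ x - ψ y| ≤ L * |x - y| := by
  obtain ⟨h1, h2, h3, h4, h5⟩ := hψ
  have hc : HasCompactSupport ψ := by
    refine HasCompactSupport.intro (isCompact_Icc (a := (-1:ℝ)) (b := 1)) ?_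
    intro x hx
    apply h4
    by_contra hh
    exact hx (abs_le.1 (not_lt.1 hh))
  obtain ⟨K, hK⟩ := (h1.of_le (m := 1) (by exact_mod_cast le_top)).lipschitzWith_of_hasCompactSupport hc (by norm_num)
  refine ⟨K + 1, by positivity, fun x y => ?_⟩
  have := hK.dist_le_mul x y
  rw [Real.dist_eq, Real.dist_eq] at this
  nlinarith [abs_nonneg (x - y)]

lemma scut_lip {ψ : ℝ → ℝ} {L : ℝ} (hL : ∀ x y, |ψ x - ψ y| ≤ L * |x - y|) {s : ℝ} (hs : 0 < s)
    (x y : ℝ) : |scut ψ s x - scut ψ s y| ≤ L / s * |x - y| := by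
  unfold scut
  refine (hL _ _).trans (le_of_eq ?_)
  rw [← sub_div, abs_div, abs_of_pos hs]; ring

lemma scut_one {ψ : ℝ → ℝ} (hψ : IsCutoff ψ) {s x : ℝ} (hs : 0 < s) (hx : |x| ≤ s / 2) :
    scut ψ s x = 1 := by
  apply hψ.2.2.2.2
  rw [abs_div, abs_of_pos hs, div_le_iff₀ hs]; linarith

lemma scut_zero {ψ : ℝ → ℝ} (hψ : IsCutoff ψ) {s x : ℝ} (hs : 0 < s) (hx : s < |x|) :
    scut ψ s x = 0 := by
  apply hψ.2.2.2.1
  rw [abs_div, abs_of_pos hs, lt_div_iff₀ hs]; linarith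

lemma scut_le {ψ : ℝ → ℝ} (hψ : IsCutoff ψ) (s x : ℝ) : |scut ψ s x| ≤ 1 := by
  have := hψ.2.2.1 (x / s)
  unfold scut
  rw [abs_of_nonneg this.1]; exact this.2

lemma scut_cont {ψ : ℝ → ℝ} (hψ : IsCutoff ψ) (s : ℝ) : Continuous (scut ψ s) :=
  hψ.1.continuous.comp (continuous_id.div_const s)

lemma tr_Qk {r : ℝ} (hr : 0 < r) (u : ℝ) :
    |({u : ℝ | r < |u|}.indicator (fun u => u⁻¹) u) - Qk r u| ≤ Pk r u := by
  have hd := den_pos hr u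
  by_cases hu : r < |u|
  · rw [indicator_of_mem (show u ∈ {u : ℝ | r < |u|} from hu)]
    have hu0 : 0 < |u| := hr.trans hu
    have : u ≠ 0 := abs_pos.1 hu0
    have e : u⁻¹ - Qk r u = r ^ 2 / (u * (u ^ 2 + r ^ 2)) := by
      unfold Qk; field_simp; ring
    rw [e, abs_div, abs_mul, abs_of_pos hd, abs_of_pos (by positivity : 0 < r ^ 2)]
    unfold Pk
    rw [div_le_div_iff₀ (by positivity) hd]
    have : r * r ≤ r * |u| := by gcongr
    nlinarith
  · rw [indicator_of_notMem (show ¬ u ∈ {u : ℝ | r < |u|} from hu)]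
    unfold Qk Pk
    rw [zero_sub, abs_neg, abs_div, abs_of_pos hd]
    gcongr
    exact not_lt.1 hu

lemma Htr_Uk {h : ℝ → ℝ} {M B r : ℝ} (H : Bdd h M B) (hr : 0 < r) (x : ℝ) :
    |Htr r h x| ≤ |Uk r h x| + π * M := by
  have e1 : Htr r h x = ∫ β, h β * ({u : ℝ | r < |u|}.indicator (fun u => u⁻¹) (x - β)) := by
    unfold Htr
    rw [← integral_indicator (meas_tr r x)]
    congr 1; ext β
    by_cases hu : r < |x - β|
    · rw [indicator_of_mem (show β ∈ {β : ℝ | r < |x - β|} from hu),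
        indicator_of_mem (show x - β ∈ {u : ℝ | r < |u|} from hu)]
    · rw [indicator_of_notMem (show ¬ β ∈ {β : ℝ | r < |x - β|} from hu),
        indicator_of_notMem (show ¬ x - β ∈ {u : ℝ | r < |u|} from hu), mul_zero]
  have i1 : Integrable (fun β => h β * ({u : ℝ | r < |u|}.indicator (fun u => u⁻¹) (x - β))) := by
    refine H.integrable.mul_bdd (c := 1 / r) ?_ (Eventually.of_forall fun β => ?_)
    · have : Measurable ({u : ℝ | r < |u|}.indicator (fun u : ℝ => u⁻¹)) :=
        measurable_inv.indicator (measurableSet_lt measurable_const (by fun_prop))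
      exact (this.comp (measurable_const.sub measurable_id)).aestronglyMeasurable
    · by_cases hu : r < |x - β|
      · rw [indicator_of_mem (show x - β ∈ {u : ℝ | r < |u|} from hu), norm_inv, one_div]
        exact inv_anti₀ hr hu.le
      · rw [indicator_of_notMem (show ¬ x - β ∈ {u : ℝ | r < |u|} from hu)]
        simp; positivity
  have e2 : Htr r h x - Uk r h x = ∫ β, h β * (({u : ℝ | r < |u|}.indicator (fun u => u⁻¹) (x - β))
      - Qk r (x - β)) := by
    rw [e1]; unfold Uk
    rw [← integral_sub i1 (hQ_int H hr x)]
    congr 1; ext β; ring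
  have e3 : |Htr r h x - Uk r h x| ≤ π * M := by
    rw [e2]
    refine le_trans ?_ (Vk_le H hr x)
    refine abs_integral_le_integral_abs.trans ?_
    refine integral_mono_of_nonneg (Eventually.of_forall fun _ => abs_nonneg _) ?_
      (Eventually.of_forall fun β => ?_)
    · have := (hP_int H hr x).abs
      refine this.congr (Eventually.of_forall fun β => ?_)
      simp only []
      rw [abs_mul, abs_of_nonneg (Pk_nonneg hr _)]
    · simp only []
      rw [abs_mul]
      exact mul_le_mul_of_nonneg_left (tr_Qk hr _) (abs_nonneg _)
  have := abs_sub_abs_le_abs_sub (Htr r h x) (Uk r h x)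
  linarith

def Hl (h : ℝ → ℝ) (x : ℝ) : ℝ := limUnder (nhdsWithin (0:ℝ) (Ioi 0)) (fun r => Htr r h x)

lemma Hl_ae {h : ℝ → ℝ} {M B : ℝ} (H : Bdd h M B) (hM : 0 < M) :
    ∀ᵐ x, Tendsto (fun r => Htr r h x) (nhdsWithin 0 (Ioi 0)) (nhds (Hl h x)) := by
  filter_upwards [Htr_ae H hM] with x hx
  exact tendsto_nhds_limUnder hx

lemma Hl_L1 {h : ℝ → ℝ} {M B R : ℝ} (H : Bdd h M B) (hM : 0 < M) (hR : 0 ≤ R) :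
    ∫⁻ x in Icc (-R) R, ‖Hl h x‖ₑ ≤ ENNReal.ofReal ((R + π ^ 2 * B + 2 * π * R) * M) := by
  have hr0 : ∀ n : ℕ, 0 < 1 / ((n:ℝ) + 1) := fun n => by positivity
  have hr : Tendsto (fun n : ℕ => 1 / ((n:ℝ) + 1)) atTop (nhdsWithin 0 (Ioi 0)) :=
    tendsto_nhdsWithin_iff.2 ⟨tendsto_one_div_add_atTop_nhds_zero_nat, Eventually.of_forall hr0⟩
  have hm : ∀ n : ℕ, Measurable (fun x => ‖Uk (1 / ((n:ℝ) + 1)) h x‖ₑ + ENNReal.ofReal (π * M)) :=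
    fun n => (Uk_meas H (hr0 n)).enorm.add_const _
  calc ∫⁻ x in Icc (-R) R, ‖Hl h x‖ₑ
      ≤ ∫⁻ x in Icc (-R) R, liminf (fun n : ℕ => ‖Uk (1 / ((n:ℝ) + 1)) h x‖ₑ + ENNReal.ofReal (π * M)) atTop := by
        refine lintegral_mono_ae (ae_restrict_of_ae ?_)
        filter_upwards [Hl_ae H hM] with x hx
        have t : Tendsto (fun n : ℕ => ‖Htr (1 / ((n:ℝ) + 1)) h x‖ₑ) atTop (nhds ‖Hl h x‖ₑ) :=
          (hx.comp hr).enorm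
        rw [← t.liminf_eq]
        refine liminf_le_liminf (Eventually.of_forall fun n => ?_)
        rw [Real.enorm_eq_ofReal_abs, Real.enorm_eq_ofReal_abs, ← ENNReal.ofReal_add (abs_nonneg _)
          (by positivity)]
        exact ENNReal.ofReal_le_ofReal (Htr_Uk H (hr0 n) x)
    _ ≤ liminf (fun n : ℕ => ∫⁻ x in Icc (-R) R, (‖Uk (1 / ((n:ℝ) + 1)) h x‖ₑ + ENNReal.ofReal (π * M))) atTop :=
        lintegral_liminf_le hm
    _ ≤ liminf (fun n : ℕ => ENNReal.ofReal ((R + π ^ 2 * B + 2 * π * R) * M)) atTop := by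
        refine liminf_le_liminf (Eventually.of_forall fun n => ?_)
        rw [lintegral_add_right _ measurable_const]
        have e1 : ∫⁻ x in Icc (-R) R, ‖Uk (1 / ((n:ℝ) + 1)) h x‖ₑ =
            ENNReal.ofReal (∫ x in Icc (-R) R, |Uk (1 / ((n:ℝ) + 1)) h x|) := by
          rw [ofReal_integral_eq_lintegral_ofReal (Uk_int H (hr0 n) _ _).abs
            (Eventually.of_forall fun _ => abs_nonneg _)]
          simp_rw [Real.enorm_eq_ofReal_abs]
        rw [e1, setLIntegral_const, Real.volume_Icc, ← ENNReal.ofReal_mul (by positivity),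
          ← ENNReal.ofReal_add (integral_nonneg fun _ => abs_nonneg _)
          (mul_nonneg (by positivity) (by linarith))]
        refine ENNReal.ofReal_le_ofReal ?_
        have := Uk_L1 H hM (hr0 n) (a := -R) (b := R) (by linarith)
        linarith
    _ = _ := by simp

lemma int_comp_abs {f : ℝ → ℝ} (hf0 : IntegrableOn f (Ioi 0)) : Integrable (fun x => f |x|) := by
  have hf : IntegrableOn (fun x => f |x|) (Ioi 0) := by
    refine hf0.congr_fun (fun x hx => ?_) measurableSet_Ioi
    rw [abs_of_pos (show 0 < x from hx)]
  have int_Iic : IntegrableOn (fun x ↦ f |x|) (Iic 0) := by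
    rw [← Measure.map_neg_eq_self (volume : Measure ℝ)]
    let m : MeasurableEmbedding fun x : ℝ => -x := (Homeomorph.neg ℝ).measurableEmbedding
    rw [m.integrableOn_map_iff]
    simp_rw [Function.comp_def, abs_neg, neg_preimage, neg_Iic, neg_zero]
    exact Iff.mpr integrableOn_Ici_iff_integrableOn_Ioi hf
  rw [← integrableOn_univ, ← Iic_union_Ioi (a := (0:ℝ))]
  exact int_Iic.union hf

/-- integrand of `T_1` -/
def FT (ψ : ℝ → ℝ) (s : ℝ) (f h : ℝ → ℝ) (α β : ℝ) : ℝ :=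
  kT f α β * h β * scut ψ s (α - β)

/-- dominating function -/
def ww (A M L R s x : ℝ) : ℝ :=
  (Iic (2 * R)).indicator (fun _ => 2 * A * M) x +
    (Icc (2 * R) (2 * s)).indicator (fun x => ((4 * A + 2 * A * L) * M * R) * x⁻¹) x

lemma ww_int {A M L R s : ℝ} (hR : 0 < R) (hRs : R ≤ s) :
    IntegrableOn (ww A M L R s) (Ioi 0) ∧ ∫ x in Ioi 0, ww A M L R s x =
      4 * A * M * R + ((4 * A + 2 * A * L) * M * R) * Real.log (s / R) := by
  have i1 : IntegrableOn ((Iic (2 * R)).indicator (fun _ : ℝ => 2 * A * M)) (Ioi 0) := by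
    rw [IntegrableOn, integrable_indicator_iff measurableSet_Iic, IntegrableOn,
      Measure.restrict_restrict measurableSet_Iic, inter_comm, Ioi_inter_Iic]
    exact integrableOn_const measure_Ioc_lt_top.ne
  have i0 : IntegrableOn (fun x : ℝ => x⁻¹) (Icc (2 * R) (2 * s)) := by
    refine ContinuousOn.integrableOn_Icc (continuousOn_inv₀.mono ?_)
    intro x hx; have := hx.1; simp; rintro rfl; linarith
  have e2 : Icc (2 * R) (2 * s) ∩ Ioi 0 = Icc (2 * R) (2 * s) := by
    rw [inter_eq_left]; intro x hx; have := hx.1; simp; linarith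
  have i2 : IntegrableOn ((Icc (2 * R) (2 * s)).indicator
      (fun x => ((4 * A + 2 * A * L) * M * R) * x⁻¹)) (Ioi 0) := by
    rw [IntegrableOn, integrable_indicator_iff measurableSet_Icc, IntegrableOn,
      Measure.restrict_restrict measurableSet_Icc, e2]
    exact i0.const_mul _
  refine ⟨i1.add i2, ?_⟩
  unfold ww
  rw [integral_add i1 i2, setIntegral_indicator measurableSet_Iic, Ioi_inter_Iic,
    setIntegral_const, setIntegral_indicator measurableSet_Icc, inter_comm, e2, integral_const_mul,
    integral_Icc_eq_integral_Ioc, ← intervalIntegral.integral_of_le (by linarith),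
    integral_inv_of_pos (by linarith) (by linarith), mul_div_mul_left _ _ (by norm_num : (2:ℝ) ≠ 0)]
  simp only [measureReal_def, Real.volume_Ioc, sub_zero, smul_eq_mul]
  rw [ENNReal.toReal_ofReal (by linarith)]
  ring

lemma FT_bound {ψ : ℝ → ℝ} (hψ : IsCutoff ψ) {L : ℝ} (hL0 : 0 < L)
    (hL : ∀ x y, |ψ x - ψ y| ≤ L * |x - y|)
    (F : FF δ A f f') {s R M : ℝ} {h : ℝ → ℝ} (H : Bdd h M (2 * s)) (hs : 0 < s) (hsδ : 2 * s < δ)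
    (hR : 0 < R) (hRs : R ≤ s / 8) {α : ℝ} (hα : |α| < R) (β : ℝ) :
    |FT ψ s f h α β - FT ψ s f h 0 β -
      bb (f' α) * ((Ioo (-(2 * R)) (2 * R)).indicator h β * (α - β)⁻¹)| ≤ ww A M L R s |β| := by
  have hA := F.Apos
  have hM := H.M_nonneg
  by_cases hβs : 2 * s < |β|
  · have h0 : h β = 0 := H.supp β hβs
    have : (Ioo (-(2 * R)) (2 * R)).indicator h β = 0 := by
      simp [indicator, h0]
    rw [this]
    unfold FT ww
    rw [h0, indicator_of_notMem (by simp; linarith), indicator_of_notMem (by simp; intro; linarith)]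
    simp
  push Not at hβs
  have hβδ : |β| < δ := by linarith
  have hαδ : |α| < δ := by linarith
  by_cases hn : |β| < 2 * R
  · have hαβ : |α - β| ≤ s / 2 := by
      have := abs_sub α β; linarith
    rw [indicator_of_mem (show β ∈ Ioo (-(2 * R)) (2 * R) from abs_lt.1 hn)]
    unfold FT
    rw [scut_one hψ hs hαβ, scut_one hψ hs (by rw [zero_sub, abs_neg]; linarith)]
    have e : kT f α β * h β * 1 - kT f 0 β * h β * 1 - bb (f' α) * (h β * (α - β)⁻¹) =
      ((kT f α β - bb (f' α) / (α - β)) - kT f 0 β) * h β := by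
      rw [div_eq_mul_inv]; ring
    have b := (abs_sub (kT f α β - bb (f' α) / (α - β)) (kT f 0 β)).trans
      (add_le_add (F.k1 hαδ hβδ) (F.k0 hβδ))
    rw [e, abs_mul]
    unfold ww
    rw [indicator_of_mem (show |β| ∈ Iic (2 * R) from hn.le),
      indicator_of_notMem (by simp only [mem_Icc, not_and]; intro; linarith), add_zero]
    calc _ ≤ (A + A) * M := mul_le_mul b (H.bd β) (abs_nonneg _) (by positivity)
      _ = _ := by ring
  · push Not at hn
    have hβ0 : 0 < |β| := by linarith
    rw [indicator_of_notMem (show ¬ β ∈ Ioo (-(2 * R)) (2 * R) from fun hh => by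
      have := abs_lt.2 hh; linarith)]
    have h1 : |scut ψ s (α - β) - scut ψ s (0 - β)| ≤ 2 * L * |α| / |β| := by
      refine (scut_lip hL hs _ _).trans ?_
      rw [show α - β - (0 - β) = α by ring, div_mul_eq_mul_div, div_le_div_iff₀ hs hβ0]
      have := mul_le_mul_of_nonneg_left hβs (by positivity : 0 ≤ L * |α|)
      linarith
    have e : FT ψ s f h α β - FT ψ s f h 0 β - bb (f' α) * (0 * (α - β)⁻¹) =
      ((kT f α β - kT f 0 β) * scut ψ s (α - β) + kT f 0 β * (scut ψ s (α - β) - scut ψ s (0 - β)))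
        * h β := by
      unfold FT; ring
    rw [e, abs_mul]
    have b : |(kT f α β - kT f 0 β) * scut ψ s (α - β) + kT f 0 β * (scut ψ s (α - β) - scut ψ s (0 - β))|
        ≤ 4 * A * |α| / |β| * 1 + A * (2 * L * |α| / |β|) := by
      refine (abs_add_le _ _).trans (add_le_add ?_ ?_)
      · rw [abs_mul]
        exact mul_le_mul (F.k2 (by linarith) hβδ hβ0) (scut_le hψ _ _) (abs_nonneg _) (by positivity)
      · rw [abs_mul]
        exact mul_le_mul (F.k0 hβδ) h1 (abs_nonneg _) hA.le
    have b2 : (Icc (2 * R) (2 * s)).indicator (fun x => ((4 * A + 2 * A * L) * M * R) * x⁻¹) |β|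
      ≤ ww A M L R s |β| := by
      unfold ww
      have : 0 ≤ (Iic (2 * R)).indicator (fun _ => 2 * A * M) |β| :=
        indicator_nonneg (fun _ _ => by positivity) _
      linarith
    refine le_trans ?_ b2
    rw [indicator_of_mem (show |β| ∈ Icc (2 * R) (2 * s) from ⟨hn, hβs⟩)]
    calc _ ≤ (4 * A * |α| / |β| * 1 + A * (2 * L * |α| / |β|)) * M :=
          mul_le_mul b (H.bd β) (abs_nonneg _) (by positivity)
      _ = (4 * A + 2 * A * L) * M * |α| * |β|⁻¹ := by field_simp
      _ ≤ (4 * A + 2 * A * L) * M * R * |β|⁻¹ := by gcongr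

lemma Bdd.ind {h : ℝ → ℝ} {M B b : ℝ} (H : Bdd h M B) (hb : 0 ≤ b) :
    Bdd ((Ioo (-b) b).indicator h) M b := by
  refine ⟨H.meas.indicator measurableSet_Ioo, fun x => ?_, fun x hx => ?_, hb⟩
  · by_cases hx : x ∈ Ioo (-b) b
    · rw [indicator_of_mem hx]; exact H.bd x
    · rw [indicator_of_notMem hx]; simpa using H.M_nonneg
  · rw [indicator_of_notMem]
    intro h; have := abs_lt.2 h; linarith

lemma FT_meas {ψ : ℝ → ℝ} (hψ : IsCutoff ψ) (s : ℝ) {f h : ℝ → ℝ} (hf : Measurable f)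
    (hh : Measurable h) (α : ℝ) : Measurable (FT ψ s f h α) := by
  unfold FT kT
  have := (scut_cont hψ s).measurable
  fun_prop

lemma T_lim {ψ : ℝ → ℝ} (hψ : IsCutoff ψ) {L : ℝ} (hL0 : 0 < L)
    (hL : ∀ x y, |ψ x - ψ y| ≤ L * |x - y|)
    (F : FF δ A f f') {s R M : ℝ} {h : ℝ → ℝ} (H : Bdd h M (2 * s)) (hs : 0 < s) (hsδ : 2 * s < δ)
    (hR : 0 < R) (hRs : R ≤ s / 8) {α : ℝ} (hα : |α| < R)
    (hl : Tendsto (fun r => Htr r ((Ioo (-(2 * R)) (2 * R)).indicator h) α) (nhdsWithin 0 (Ioi 0))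
      (nhds (Hl ((Ioo (-(2 * R)) (2 * R)).indicator h) α))) :
    |pvI (FT ψ s f h α) α - ∫ β, FT ψ s f h 0 β| ≤
      A * R * |Hl ((Ioo (-(2 * R)) (2 * R)).indicator h) α| +
        2 * (4 * A * M * R + ((4 * A + 2 * A * L) * M * R) * Real.log (s / R)) := by
  set hR' := (Ioo (-(2 * R)) (2 * R)).indicator h with hRdef
  have HR : Bdd hR' M (2 * R) := H.ind (by linarith)
  have hA := F.Apos
  have hM := H.M_nonneg
  set P : ℝ → ℝ := fun β => FT ψ s f h α β - bb (f' α) * (hR' β * (α - β)⁻¹) with hP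
  have hF0i : Integrable (FT ψ s f h 0) := by
    refine (H.integrable.norm.const_mul A).mono' (FT_meas hψ s F.meas H.meas 0).aestronglyMeasurable
      (Eventually.of_forall fun β => ?_)
    by_cases hβs : 2 * s < |β|
    · unfold FT; rw [H.supp β hβs]; simp
    · unfold FT
      rw [Real.norm_eq_abs, abs_mul, abs_mul]
      calc _ ≤ A * |h β| * 1 := by
            refine mul_le_mul (mul_le_mul_of_nonneg_right (F.k0 (by linarith)) (abs_nonneg _))
              (scut_le hψ _ _) (abs_nonneg _) (by positivity)
        _ = _ := by simp
  have hwi := ww_int (A := A) (M := M) (L := L) hR (by linarith : R ≤ s)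
  have hwi' : Integrable (fun β => ww A M L R s |β|) := by
    exact int_comp_abs hwi.1
  have hPm : Measurable P := by
    have := FT_meas hψ s F.meas H.meas α
    have := HR.meas
    fun_prop
  have hb : ∀ β, |P β - FT ψ s f h 0 β| ≤ ww A M L R s |β| := by
    intro β
    have := FT_bound hψ hL0 hL F H hs hsδ hR hRs hα β
    refine le_trans (le_of_eq ?_) this
    congr 1; rw [hP]; ring
  have hPi : Integrable P := by
    have i : Integrable (fun β => P β - FT ψ s f h 0 β) := hwi'.mono'
      (hPm.sub (FT_meas hψ s F.meas H.meas 0)).aestronglyMeasurable (Eventually.of_forall hb)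
    refine (i.add hF0i).congr (Eventually.of_forall fun β => ?_)
    simp
  have hlim : Tendsto (fun r => ∫ β in {β : ℝ | r < |α - β|}, FT ψ s f h α β) (nhdsWithin 0 (Ioi 0))
      (nhds ((∫ β, P β) + bb (f' α) * Hl hR' α)) := by
    have t1 : Tendsto (fun r => ∫ β in {β : ℝ | r < |α - β|}, P β) (nhdsWithin 0 (Ioi 0))
        (nhds (∫ β, P β)) := by
      simp_rw [← integral_indicator (meas_tr _ α)]
      refine tendsto_integral_filter_of_dominated_convergence (fun β => |P β|)
        (Eventually.of_forall fun r => (hPm.indicator (meas_tr r α)).aestronglyMeasurable)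
        (Eventually.of_forall fun r => Eventually.of_forall fun β => norm_indicator_le_norm_self _ _)
        hPi.abs ?_
      filter_upwards [ae_ne' α] with β hβ
      refine tendsto_const_nhds.congr' ?_
      have : 0 < |α - β| := abs_pos.2 (sub_ne_zero.2 hβ.symm)
      filter_upwards [mem_nhdsWithin_of_mem_nhds (Iio_mem_nhds this)] with r hr
      rw [indicator_of_mem (show β ∈ {β : ℝ | r < |α - β|} from hr)]
    refine (t1.add (hl.const_mul (bb (f' α)))).congr' ?_
    filter_upwards [self_mem_nhdsWithin] with r hr
    unfold Htr
    have i2 := HR.inv_int (r := r) hr α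
    rw [integrable_indicator_iff (meas_tr r α)] at i2
    rw [← integral_const_mul, ← integral_add hPi.integrableOn (i2.const_mul _)]
    congr 1; ext β; rw [hP]; ring
  have hpv : pvI (FT ψ s f h α) α = (∫ β, P β) + bb (f' α) * Hl hR' α := hlim.limUnder_eq
  rw [hpv]
  have e : (∫ β, P β) + bb (f' α) * Hl hR' α - ∫ β, FT ψ s f h 0 β =
    bb (f' α) * Hl hR' α + ∫ β, (P β - FT ψ s f h 0 β) := by
    rw [integral_sub hPi hF0i]; ring
  rw [e]
  refine (abs_add_le _ _).trans (add_le_add ?_ ?_)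
  · rw [abs_mul]
    refine mul_le_mul_of_nonneg_right ((bb_le _).trans ((F.d1 (by linarith)).trans ?_)) (abs_nonneg _)
    gcongr
  · refine abs_integral_le_integral_abs.trans ?_
    rw [← hwi.2, ← integral_comp_abs]
    exact integral_mono (hPi.sub hF0i).abs hwi' hb

lemma T_L1 {ψ : ℝ → ℝ} (hψ : IsCutoff ψ) {L : ℝ} (hL0 : 0 < L)
    (hL : ∀ x y, |ψ x - ψ y| ≤ L * |x - y|)
    (F : FF δ A f f') {ε s R M : ℝ} {h : ℝ → ℝ} (H : Bdd h M (2 * s)) (hs : 0 < s) (hs1 : s ≤ 1)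
    (hsδ : 2 * s < δ) (hε : 0 < ε) (hε1 : 1 ≤ Real.log (1 / ε)) (hεR : ε ≤ R)
    (hR : 0 < R) (hRs : R ≤ s / 8) (hM : 0 < M) :
    ∫⁻ α in Ioo (-R) R, ‖pvI (FT ψ s f h α) α - ∫ β, FT ψ s f h 0 β‖ₑ ≤
      ENNReal.ofReal ((A * (1 + 2 * π ^ 2 + 2 * π) + 4 * (8 * A + 2 * A * L)) * R ^ 2
        * Real.log (1 / ε) * M) := by
  have hA := F.Apos
  have HR : Bdd ((Ioo (-(2 * R)) (2 * R)).indicator h) M (2 * R) := H.ind (by linarith)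
  set K := 2 * (8 * A + 2 * A * L) * R * Real.log (1 / ε) * M with hK
  have hK0 : 0 ≤ K := by rw [hK]; positivity
  have hlog : Real.log (s / R) ≤ Real.log (1 / ε) := by
    refine Real.log_le_log (by positivity) ?_
    exact div_le_div₀ zero_le_one hs1 hε hεR
  calc _ ≤ ∫⁻ α in Ioo (-R) R, (ENNReal.ofReal (A * R) *
        ‖Hl ((Ioo (-(2 * R)) (2 * R)).indicator h) α‖ₑ + ENNReal.ofReal K) := by
        refine lintegral_mono_ae ?_
        filter_upwards [ae_restrict_of_ae (Hl_ae HR hM), ae_restrict_mem measurableSet_Ioo] with α h1 h2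
        have := T_lim hψ hL0 hL F H hs hsδ hR hRs (abs_lt.2 h2) h1
        rw [Real.enorm_eq_ofReal_abs, Real.enorm_eq_ofReal_abs, ← ENNReal.ofReal_mul (by positivity),
          ← ENNReal.ofReal_add (by positivity) hK0]
        refine ENNReal.ofReal_le_ofReal (this.trans ?_)
        refine add_le_add le_rfl ?_
        rw [hK]
        have a1 : 4 * A * M * R ≤ 4 * A * M * R * Real.log (1 / ε) :=
          le_mul_of_one_le_right (by positivity) hε1
        have a2 := mul_le_mul_of_nonneg_left hlog (by positivity : 0 ≤ (4 * A + 2 * A * L) * M * R)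
        linarith
    _ = ENNReal.ofReal (A * R) * (∫⁻ α in Ioo (-R) R, 
        ‖Hl ((Ioo (-(2 * R)) (2 * R)).indicator h) α‖ₑ) + ENNReal.ofReal K * ENNReal.ofReal (2 * R) := by
        rw [lintegral_add_right _ measurable_const, lintegral_const_mul' _ _ ENNReal.ofReal_ne_top,
          setLIntegral_const, Real.volume_Ioo]
        congr 3; ring
    _ ≤ ENNReal.ofReal (A * R) * ENNReal.ofReal ((R + π ^ 2 * (2 * R) + 2 * π * R) * M)
        + ENNReal.ofReal K * ENNReal.ofReal (2 * R) := by
        gcongr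
        exact (lintegral_mono_set Ioo_subset_Icc_self).trans (Hl_L1 HR hM hR.le)
    _ ≤ _ := by
        rw [← ENNReal.ofReal_mul (by positivity), ← ENNReal.ofReal_mul hK0, 
          ← ENNReal.ofReal_add (by positivity) (by positivity)]
        refine ENNReal.ofReal_le_ofReal ?_
        have a1 : A * R * ((R + π ^ 2 * (2 * R) + 2 * π * R) * M) ≤ 
          A * R * ((R + π ^ 2 * (2 * R) + 2 * π * R) * M) * Real.log (1 / ε) :=
          le_mul_of_one_le_right (by positivity) hε1
        rw [hK]
        linarith

structure XX (ε s K : ℝ) (X : ℝ → ℝ) : Prop where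
  meas : Measurable X
  lo : ∀ a, |a| ≤ s → ε ≤ X a
  hi : ∀ a, |a| ≤ s → X a ≤ K * ε
  lip : ∀ a b m, m ≤ s → |a| ≤ m → |b| ≤ m → |X a - X b| ≤ K * m * |a - b|
  K1 : 1 ≤ K

structure PH (ε : ℝ) (φ : ℝ → ℝ) : Prop where
  cd : ContDiff ℝ 1 φ
  b0 : ∀ a, |φ a| ≤ Pk ε a
  b1 : ∀ a, |deriv φ a| ≤ ε / (ε ^ 3 + |a| ^ 3)

def kap (y x : ℝ) : ℝ := y ^ 2 / (x ^ 2 + y ^ 2)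

def PP (X Φ : ℝ → ℝ) (a x : ℝ) : ℝ := kap (X a) x * Φ a

def uu (X Φ χ : ℝ → ℝ) (β x : ℝ) : ℝ := PP X Φ (β + x) x * (χ x * x⁻¹)

def vv (X Φ χ : ℝ → ℝ) (β x : ℝ) : ℝ := uu X Φ χ β x + uu X Φ χ β (-x)

lemma kap_neg (y x : ℝ) : kap y (-x) = kap y x := by simp [kap]

lemma kap_nonneg (y x : ℝ) : 0 ≤ kap y x := by unfold kap; positivity

lemma kap_le_one (y x : ℝ) : kap y x ≤ 1 := by
  unfold kap
  exact div_le_one_of_le₀ (by nlinarith [sq_nonneg x]) (by positivity)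

lemma kap_le {ε K y x : ℝ} (hε : 0 < ε) (hK : 1 ≤ K) (h1 : ε ≤ y) (h2 : y ≤ K * ε) :
    kap y x ≤ K ^ 2 * ε * Pk ε x := by
  unfold kap Pk
  have hy : 0 < y := by linarith
  rw [mul_div_assoc', div_le_div_iff₀ (by positivity) (by positivity)]
  have a1 : y ^ 2 ≤ (K * ε) ^ 2 := by gcongr
  have a2 : ε ^ 2 ≤ y ^ 2 := by gcongr
  have a3 : 1 ≤ K ^ 2 := one_le_pow₀ hK
  have a4 : y ^ 2 * x ^ 2 ≤ (K * ε) ^ 2 * x ^ 2 := by gcongr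
  have a5 : y ^ 2 * ε ^ 2 ≤ K ^ 2 * (y ^ 2 * ε ^ 2) := le_mul_of_one_le_left (by positivity) a3
  nlinarith

lemma kap_diff {ε K y z x : ℝ} (hε : 0 < ε) (h1 : ε ≤ y) (h2 : y ≤ K * ε)
    (h3 : ε ≤ z) (h4 : z ≤ K * ε) :
    |kap y x - kap z x| ≤ 2 * K * |y - z| * Pk ε x := by
  have hy : 0 < y := by linarith
  have hz : 0 < z := by linarith
  have e : kap y x - kap z x = (y - z) * (y + z) * (x ^ 2 / (x ^ 2 + z ^ 2)) / (x ^ 2 + y ^ 2) := by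
    unfold kap
    field_simp
    ring
  have q1 : x ^ 2 / (x ^ 2 + z ^ 2) ≤ 1 := div_le_one_of_le₀ (by nlinarith) (by positivity)
  have q0 : 0 ≤ x ^ 2 / (x ^ 2 + z ^ 2) := by positivity
  rw [e, abs_div, abs_mul, abs_mul, abs_of_nonneg q0, abs_of_pos (by positivity : 0 < y + z),
    abs_of_pos (by positivity : 0 < x ^ 2 + y ^ 2)]
  unfold Pk
  rw [show 2 * K * |y - z| * (ε / (x ^ 2 + ε ^ 2)) = (2 * K * |y - z| * ε) / (x ^ 2 + ε ^ 2) by ring]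
  have a2 : ε ^ 2 ≤ y ^ 2 := by gcongr
  refine div_le_div₀ ?_ ?_ (by positivity) (by linarith)
  · have : 0 ≤ K := by nlinarith
    positivity
  · calc |y - z| * (y + z) * (x ^ 2 / (x ^ 2 + z ^ 2)) ≤ |y - z| * (y + z) * 1 := by gcongr
      _ ≤ |y - z| * (K * ε + K * ε) * 1 := by gcongr
      _ = _ := by ring

lemma phi_near {ε d a : ℝ} (hε : 0 < ε) (hd : 0 < d) (ha : 3 * d / 4 ≤ |a| + ε) :
    Pk ε a ≤ 4 * ε / d ^ 2 ∧ ε / (ε ^ 3 + |a| ^ 3) ≤ 10 * ε / d ^ 3 := by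
  have h0 := abs_nonneg a
  constructor
  · unfold Pk
    rw [div_le_div_iff₀ (by positivity) (by positivity), ← sq_abs a]
    have : (3 * d / 4) ^ 2 ≤ (|a| + ε) ^ 2 := by gcongr
    have h2 : d ^ 2 ≤ 4 * (|a| ^ 2 + ε ^ 2) := by nlinarith [sq_nonneg (|a| - ε)]
    nlinarith
  · rw [div_le_div_iff₀ (by positivity) (by positivity)]
    have : (3 * d / 4) ^ 3 ≤ (|a| + ε) ^ 3 := by gcongr
    have h3 : (|a| + ε) ^ 3 ≤ 4 * (|a| ^ 3 + ε ^ 3) := by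
      nlinarith [mul_nonneg (add_nonneg h0 hε.le) (sq_nonneg (|a| - ε))]
    have h2 : d ^ 3 ≤ 10 * (ε ^ 3 + |a| ^ 3) := by
      have : 0 ≤ ε ^ 3 + |a| ^ 3 := by positivity
      nlinarith
    nlinarith

def Bb (ε : ℝ) (β x : ℝ) : ℝ := Pk ε x + Pk ε (β + x) + Pk ε (β - x)

lemma Bb_neg (ε β x : ℝ) : Bb ε β (-x) = Bb ε β x := by
  unfold Bb; rw [Pk_neg, sub_neg_eq_add, ← sub_eq_add_neg]; ring

lemma vv_neg (X Φ χ : ℝ → ℝ) (β x : ℝ) : vv X Φ χ β (-x) = vv X Φ χ β x := by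
  unfold vv; rw [neg_neg, add_comm]

lemma vv_eq {X Φ χ : ℝ → ℝ} (hχ : ∀ x, χ (-x) = χ x) (β x : ℝ) :
    vv X Φ χ β x = (PP X Φ (β + x) x - PP X Φ (β - x) x) * (χ x * x⁻¹) := by
  unfold vv uu
  rw [hχ, inv_neg]
  unfold PP
  rw [kap_neg, ← sub_eq_add_neg]
  ring

section
variable {ε s K L : ℝ} {X φ ψ : ℝ → ℝ}

lemma scut_even (hψ : IsCutoff ψ) (t x : ℝ) : scut ψ t (-x) = scut ψ t x := by
  unfold scut; rw [neg_div, hψ.2.1]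

lemma vv_zero (hψ : IsCutoff ψ) (hs : 0 < s) {β : ℝ} (hβ : s / 32 < |β|) (x : ℝ) :
    vv X (fun a => scut ψ (s / 2 ^ 6) a * φ a) (scut ψ (s / 2 ^ 6)) β x = 0 := by
  rw [vv_eq (scut_even hψ _)]
  by_cases hx : s / 64 < |x|
  · rw [scut_zero hψ (by positivity) (show s / 2 ^ 6 < |x| by norm_num; exact hx)]; simp
  · push Not at hx
    have h1 : s / 2 ^ 6 < |β + x| := by
      have := abs_sub_abs_le_abs_sub β (-x)
      rw [sub_neg_eq_add, abs_neg] at this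
      norm_num; linarith
    have h2 : s / 2 ^ 6 < |β - x| := by
      have := abs_sub_abs_le_abs_sub β x
      norm_num; linarith
    unfold PP
    simp only []
    rw [scut_zero hψ (by positivity) h1, scut_zero hψ (by positivity) h2]; simp

lemma vv_bound_pos (hψ : IsCutoff ψ) (hL0 : 0 < L) (hL : ∀ x y, |ψ x - ψ y| ≤ L * |x - y|)
    (HX : XX ε s K X) (Hφ : PH ε φ) (hs : 0 < s) (hs1 : s ≤ 1 / 1000) (hε : ε = s ^ 2)
    (β : ℝ) {x : ℝ} (hx : 0 < x) :
    |vv X (fun a => scut ψ (s / 2 ^ 6) a * φ a) (scut ψ (s / 2 ^ 6)) β x| ≤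
      K ^ 2 * (512 * L + 64) * (ε ^ 2 / (|β| + ε) ^ 3) * Bb ε β x := by
  have hε0 : 0 < ε := by rw [hε]; positivity
  have hK := HX.K1
  have hB0 : 0 ≤ Bb ε β x := by
    unfold Bb
    have := Pk_nonneg hε0 x
    have := Pk_nonneg hε0 (β + x)
    have := Pk_nonneg hε0 (β - x)
    positivity
  have hd0 : 0 < |β| + ε := by positivity
  have hR0 : 0 ≤ K ^ 2 * (512 * L + 64) * (ε ^ 2 / (|β| + ε) ^ 3) * Bb ε β x := by positivity
  by_cases hβ : s / 32 < |β|
  · rw [vv_zero hψ hs hβ, abs_zero]; exact hR0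
  push Not at hβ
  rw [vv_eq (scut_even hψ _)]
  by_cases hxs : s / 64 < x
  · rw [scut_zero hψ (by positivity) (show s / 2 ^ 6 < |x| by
      rw [abs_of_pos hx]; norm_num; exact hxs)]; simpa using hR0
  push Not at hxs
  have hχ1 := scut_le hψ (s / 2 ^ 6)
  set χ := scut ψ (s / 2 ^ 6) with hχ
  set d := |β| + ε with hd
  have hεs : ε ≤ s / 1000 := by rw [hε]; nlinarith
  have hds : d ≤ s := by linarith
  have hd2 : d ^ 2 ≤ ε := by rw [hε]; gcongr
  have ha1 : |β + x| ≤ |β| + x := (abs_add_le _ _).trans (by rw [abs_of_pos hx])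
  have ha2 : |β - x| ≤ |β| + x := (abs_sub _ _).trans (by rw [abs_of_pos hx])
  have has : |β| + x ≤ s := by linarith
  have hΦ : ∀ a, |χ a * φ a| ≤ Pk ε a := fun a => by
    rw [abs_mul]
    calc _ ≤ 1 * Pk ε a := mul_le_mul (hχ1 a) (Hφ.b0 a) (abs_nonneg _) zero_le_one
      _ = _ := one_mul _
  have hcut : |χ x * x⁻¹| ≤ x⁻¹ := by
    rw [abs_mul, abs_of_pos (inv_pos.2 hx)]
    exact mul_le_of_le_one_left (by positivity) (hχ1 x)
  have k1 : kap (X (β + x)) x ≤ K ^ 2 * ε * Pk ε x :=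
    kap_le hε0 hK (HX.lo _ (ha1.trans has)) (HX.hi _ (ha1.trans has))
  have k2 : kap (X (β - x)) x ≤ K ^ 2 * ε * Pk ε x :=
    kap_le hε0 hK (HX.lo _ (ha2.trans has)) (HX.hi _ (ha2.trans has))
  have hp0 := Pk_nonneg hε0 x
  have hp1 := Pk_nonneg hε0 (β + x)
  have hp2 := Pk_nonneg hε0 (β - x)
  rw [abs_mul]
  by_cases hfar : d / 4 < x
  · -- far
    have c1 : K ^ 2 * ε * Pk ε x * x⁻¹ ≤ K ^ 2 * 64 * (ε ^ 2 / d ^ 3) := by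
      have : ε * Pk ε x * x⁻¹ ≤ 64 * (ε ^ 2 / d ^ 3) := by
        unfold Pk
        have hx3 : (d / 4) ^ 3 ≤ x ^ 3 := by gcongr
        rw [← div_eq_mul_inv, mul_div_assoc', div_div, mul_div_assoc',
          div_le_div_iff₀ (by positivity) (by positivity)]
        have : d ^ 3 ≤ 64 * ((x ^ 2 + ε ^ 2) * x) := by nlinarith [mul_pos (pow_pos hε0 2) hx]
        calc ε * ε * d ^ 3 ≤ ε * ε * (64 * ((x ^ 2 + ε ^ 2) * x)) := by gcongr
          _ = _ := by ring
      calc _ = K ^ 2 * (ε * Pk ε x * x⁻¹) := by ring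
        _ ≤ K ^ 2 * (64 * (ε ^ 2 / d ^ 3)) := by gcongr
        _ = _ := by ring
    have c2 : |PP X (fun a => χ a * φ a) (β + x) x - PP X (fun a => χ a * φ a) (β - x) x| ≤
        K ^ 2 * ε * Pk ε x * (Pk ε (β + x) + Pk ε (β - x)) := by
      refine (abs_sub _ _).trans ?_
      unfold PP
      rw [abs_mul (kap (X (β + x)) x), abs_mul (kap (X (β - x)) x), abs_of_nonneg (kap_nonneg _ _), abs_of_nonneg (kap_nonneg _ _), mul_add]
      exact add_le_add (mul_le_mul k1 (hΦ _) (abs_nonneg _) (by positivity))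
        (mul_le_mul k2 (hΦ _) (abs_nonneg _) (by positivity))
    calc _ ≤ (K ^ 2 * ε * Pk ε x * (Pk ε (β + x) + Pk ε (β - x))) * x⁻¹ :=
          mul_le_mul c2 hcut (abs_nonneg _) (by positivity)
      _ = (K ^ 2 * ε * Pk ε x * x⁻¹) * (Pk ε (β + x) + Pk ε (β - x)) := by ring
      _ ≤ (K ^ 2 * 64 * (ε ^ 2 / d ^ 3)) * (Pk ε (β + x) + Pk ε (β - x)) := by gcongr
      _ ≤ (K ^ 2 * (512 * L + 64) * (ε ^ 2 / d ^ 3)) * (Pk ε (β + x) + Pk ε (β - x)) := by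
          gcongr; linarith
      _ ≤ _ := by
          unfold Bb
          gcongr
          linarith
  · push Not at hfar
    have near : ∀ z ∈ uIcc (β - x) (β + x), 3 * d / 4 ≤ |z| + ε := by
      intro z hz
      rw [uIcc_of_le (by linarith)] at hz
      have h1 : |β - z| ≤ x := by rw [abs_le]; constructor <;> linarith [hz.1, hz.2]
      have := abs_sub_abs_le_abs_sub β z
      linarith
    have n1 := phi_near hε0 hd0 (near _ right_mem_uIcc)
    have n2 := phi_near hε0 hd0 (near _ left_mem_uIcc)
    have φd : |φ (β + x) - φ (β - x)| ≤ 10 * ε / d ^ 3 * (2 * x) := by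
      have key := (convex_uIcc (β - x) (β + x)).norm_image_sub_le_of_norm_deriv_le
        (f := φ) (C := 10 * ε / d ^ 3) (fun z _ => Hφ.cd.differentiable (by norm_num) z)
        (fun z hz => (Hφ.b1 z).trans (phi_near hε0 hd0 (near z hz)).2) left_mem_uIcc right_mem_uIcc
      rw [Real.norm_eq_abs, Real.norm_eq_abs, show β + x - (β - x) = 2 * x by ring,
        abs_of_pos (by positivity : 0 < 2 * x)] at key
      exact key
    have χd : |χ (β + x) - χ (β - x)| ≤ 128 * L * x / d := by
      refine (scut_lip hL (by positivity) _ _).trans ?_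
      rw [show β + x - (β - x) = 2 * x by ring, abs_of_pos (by positivity : 0 < 2 * x)]
      rw [div_mul_eq_mul_div, div_le_div_iff₀ (by positivity) hd0]
      have := mul_le_mul_of_nonneg_left hds (by positivity : 0 ≤ L * x)
      norm_num
      linarith
    have Φd : |χ (β + x) * φ (β + x) - χ (β - x) * φ (β - x)| ≤ (512 * L + 20) * ε * x / d ^ 3 := by
      have e : χ (β + x) * φ (β + x) - χ (β - x) * φ (β - x) =
        (χ (β + x) - χ (β - x)) * φ (β + x) + χ (β - x) * (φ (β + x) - φ (β - x)) := by ring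
      rw [e]
      refine (abs_add_le _ _).trans ?_
      rw [abs_mul, abs_mul]
      calc _ ≤ 128 * L * x / d * (4 * ε / d ^ 2) + 1 * (10 * ε / d ^ 3 * (2 * x)) := by
            refine add_le_add (mul_le_mul χd ((Hφ.b0 _).trans n1.1) (abs_nonneg _) (by positivity))
              (mul_le_mul (hχ1 _) φd (abs_nonneg _) zero_le_one)
        _ = _ := by field_simp; ring
    have κd : |kap (X (β + x)) x - kap (X (β - x)) x| ≤ 5 * K ^ 2 * d * x * Pk ε x := by
      refine (kap_diff hε0 (HX.lo _ (ha1.trans has)) (HX.hi _ (ha1.trans has))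
        (HX.lo _ (ha2.trans has)) (HX.hi _ (ha2.trans has))).trans ?_
      have l := HX.lip (β + x) (β - x) (|β| + x) has ha1 ha2
      rw [show β + x - (β - x) = 2 * x by ring, abs_of_pos (by positivity : 0 < 2 * x)] at l
      have hm : |β| + x ≤ 5 * d / 4 := by linarith
      calc _ ≤ 2 * K * (K * (5 * d / 4) * (2 * x)) * Pk ε x := by
            have : K * (|β| + x) * (2 * x) ≤ K * (5 * d / 4) * (2 * x) := by gcongr
            gcongr
            linarith
        _ = _ := by ring
    have c2 : |PP X (fun a => χ a * φ a) (β + x) x - PP X (fun a => χ a * φ a) (β - x) x| ≤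
        K ^ 2 * (512 * L + 40) * (ε ^ 2 / d ^ 3) * Pk ε x * x := by
      have e : PP X (fun a => χ a * φ a) (β + x) x - PP X (fun a => χ a * φ a) (β - x) x =
        (kap (X (β + x)) x - kap (X (β - x)) x) * (χ (β + x) * φ (β + x)) +
        kap (X (β - x)) x * (χ (β + x) * φ (β + x) - χ (β - x) * φ (β - x)) := by
        unfold PP; ring
      rw [e]
      refine (abs_add_le _ _).trans ?_
      rw [abs_mul (_ - _), abs_mul (kap (X (β - x)) x), abs_of_nonneg (kap_nonneg _ _)]
      calc _ ≤ 5 * K ^ 2 * d * x * Pk ε x * (4 * ε / d ^ 2) +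
            K ^ 2 * ε * Pk ε x * ((512 * L + 20) * ε * x / d ^ 3) :=
            add_le_add (mul_le_mul κd ((hΦ _).trans n1.1) (abs_nonneg _) (by positivity))
              (mul_le_mul k2 Φd (abs_nonneg _) (by positivity))
        _ = 20 * K ^ 2 * x * Pk ε x * ε / d ^ 3 * d ^ 2 +
            K ^ 2 * ε * Pk ε x * ((512 * L + 20) * ε * x / d ^ 3) := by field_simp; ring
        _ ≤ 20 * K ^ 2 * x * Pk ε x * ε / d ^ 3 * ε +
            K ^ 2 * ε * Pk ε x * ((512 * L + 20) * ε * x / d ^ 3) := by gcongr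
        _ = _ := by field_simp; ring
    calc _ ≤ (K ^ 2 * (512 * L + 40) * (ε ^ 2 / d ^ 3) * Pk ε x * x) * x⁻¹ :=
          mul_le_mul c2 hcut (abs_nonneg _) (by positivity)
      _ = K ^ 2 * (512 * L + 40) * (ε ^ 2 / d ^ 3) * Pk ε x := by field_simp
      _ ≤ K ^ 2 * (512 * L + 64) * (ε ^ 2 / d ^ 3) * Pk ε x := by gcongr; norm_num
      _ ≤ _ := by
          unfold Bb
          gcongr
          linarith

lemma vv_bound (hψ : IsCutoff ψ) (hL0 : 0 < L) (hL : ∀ x y, |ψ x - ψ y| ≤ L * |x - y|)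
    (HX : XX ε s K X) (Hφ : PH ε φ) (hs : 0 < s) (hs1 : s ≤ 1 / 1000) (hε : ε = s ^ 2)
    (β x : ℝ) :
    |vv X (fun a => scut ψ (s / 2 ^ 6) a * φ a) (scut ψ (s / 2 ^ 6)) β x| ≤
      K ^ 2 * (512 * L + 64) * (ε ^ 2 / (|β| + ε) ^ 3) * Bb ε β x := by
  rcases lt_trichotomy x 0 with h | h | h
  · rw [← vv_neg, ← Bb_neg]
    exact vv_bound_pos hψ hL0 hL HX Hφ hs hs1 hε β (by linarith)
  · have hε0 : 0 < ε := by rw [hε]; positivity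
    rw [vv_eq (scut_even hψ _), h]
    have : 0 ≤ Bb ε β 0 := by
      unfold Bb
      have := Pk_nonneg hε0 0
      have := Pk_nonneg hε0 (β + 0)
      have := Pk_nonneg hε0 (β - 0)
      positivity
    simp only [inv_zero, mul_zero, abs_zero]
    positivity
  · exact vv_bound_pos hψ hL0 hL HX Hφ hs hs1 hε β h
end

section
variable {ε s K L : ℝ} {X φ ψ : ℝ → ℝ}

lemma Bb_int (hε : 0 < ε) (β : ℝ) : Integrable (Bb ε β) ∧ ∫ x, Bb ε β x = 3 * π := by
  have i1 := Pk_int hε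
  have i2 : Integrable (fun x => Pk ε (β + x)) := i1.comp_add_left β
  have i3 : Integrable (fun x => Pk ε (β - x)) := i1.comp_sub_left β
  have i12 : Integrable (fun x => Pk ε x + Pk ε (β + x)) := i1.add i2
  refine ⟨i12.add i3, ?_⟩
  unfold Bb
  rw [integral_add i12 i3, integral_add i1 i2, integral_add_left_eq_self (Pk ε) β,
    integral_sub_left_eq_self (Pk ε) volume β, Pk_integral hε]
  ring

lemma uu_meas {X Φ χ : ℝ → ℝ} (hX : Measurable X) (hΦ : Measurable Φ) (hχ : Measurable χ) :
    Measurable (fun p : ℝ × ℝ => uu X Φ χ p.1 p.2) := by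
  unfold uu PP kap
  fun_prop

lemma vv_meas {X Φ χ : ℝ → ℝ} (hX : Measurable X) (hΦ : Measurable Φ) (hχ : Measurable χ) :
    Measurable (fun p : ℝ × ℝ => vv X Φ χ p.1 p.2) := by
  have h := uu_meas hX hΦ hχ
  have h2 : Measurable (fun p : ℝ × ℝ => uu X Φ χ p.1 (-p.2)) :=
    h.comp (measurable_fst.prodMk measurable_snd.neg)
  exact h.add h2

lemma uu_le {X Φ χ : ℝ → ℝ} (hΦ : ∀ a, |Φ a| ≤ Pk ε a) (hχ : ∀ a, |χ a| ≤ 1) (hε : 0 < ε) (β x : ℝ) :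
    |uu X Φ χ β x| ≤ |x|⁻¹ * Pk ε (β + x) := by
  unfold uu PP
  rw [abs_mul, abs_mul, abs_of_nonneg (kap_nonneg _ _), abs_mul, abs_inv]
  have := Pk_nonneg hε (β + x)
  calc _ ≤ (1 * Pk ε (β + x)) * (1 * |x|⁻¹) := by
        refine mul_le_mul (mul_le_mul (kap_le_one _ _) (hΦ _) (abs_nonneg _) zero_le_one)
          (mul_le_mul_of_nonneg_right (hχ _) (by positivity)) (by positivity) (by positivity)
    _ = _ := by ring

def G0 (X Φ χ : ℝ → ℝ) (β : ℝ) : ℝ := 1 / 2 * ∫ x, vv X Φ χ β x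

set_option maxHeartbeats 1000000 in
lemma pv_eq {X Φ χ : ℝ → ℝ} (hX : Measurable X) (hΦm : Measurable Φ) (hχm : Measurable χ)
    (hΦ : ∀ a, |Φ a| ≤ Pk ε a) (hχ : ∀ a, |χ a| ≤ 1) (hε : 0 < ε) (β : ℝ)
    {C : ℝ} (hv : ∀ x, |vv X Φ χ β x| ≤ C * Bb ε β x) :
    pvI (fun α => uu X Φ χ β (α - β)) β = G0 X Φ χ β := by
  have hum : Measurable (uu X Φ χ β) :=
    (uu_meas hX hΦm hχm).comp (measurable_const.prodMk measurable_id)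
  have hvm : Measurable (vv X Φ χ β) :=
    (vv_meas hX hΦm hχm).comp (measurable_const.prodMk measurable_id)
  have hS : ∀ r, MeasurableSet {x : ℝ | r < |x|} := fun r =>
    measurableSet_lt measurable_const (by fun_prop)
  have t1 : Tendsto (fun r => ∫ x, {x : ℝ | r < |x|}.indicator (vv X Φ χ β) x) (nhdsWithin 0 (Ioi 0))
      (nhds (∫ x, vv X Φ χ β x)) := by
    refine tendsto_integral_filter_of_dominated_convergence (fun x => C * Bb ε β x)
      (Eventually.of_forall fun r => (hvm.indicator (hS r)).aestronglyMeasurable)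
      (Eventually.of_forall fun r => Eventually.of_forall fun x =>
        (norm_indicator_le_norm_self _ _).trans (hv x))
      ((Bb_int hε β).1.const_mul C) ?_
    filter_upwards [ae_ne' 0] with x hx
    refine tendsto_const_nhds.congr' ?_
    have : 0 < |x| := abs_pos.2 hx
    filter_upwards [mem_nhdsWithin_of_mem_nhds (Iio_mem_nhds this)] with r hr
    rw [indicator_of_mem (show x ∈ {x : ℝ | r < |x|} from hr)]
  suffices key : Tendsto (fun r => ∫ α in {α : ℝ | r < |β - α|}, uu X Φ χ β (α - β)) (nhdsWithin 0 (Ioi 0))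
      (nhds (G0 X Φ χ β)) by
    exact key.limUnder_eq
  refine (t1.const_mul (1 / 2)).congr' ?_
  filter_upwards [self_mem_nhdsWithin] with r (hr : 0 < r)
  have iu : Integrable ({x : ℝ | r < |x|}.indicator (uu X Φ χ β)) := by
    refine (((Pk_int hε).comp_add_left β).const_mul r⁻¹).mono'
      (hum.indicator (hS r)).aestronglyMeasurable (Eventually.of_forall fun x => ?_)
    have hp := Pk_nonneg hε (β + x)
    by_cases hx : r < |x|
    · rw [indicator_of_mem (show x ∈ {x : ℝ | r < |x|} from hx)]
      refine (uu_le hΦ hχ hε β x).trans ?_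
      gcongr
    · rw [indicator_of_notMem (show ¬ x ∈ {x : ℝ | r < |x|} from hx), norm_zero]
      positivity
  have e1 : ∫ α in {α : ℝ | r < |β - α|}, uu X Φ χ β (α - β) =
      ∫ x, {x : ℝ | r < |x|}.indicator (uu X Φ χ β) x := by
    rw [← integral_indicator (meas_tr r β), ← integral_sub_right_eq_self ({x : ℝ | r < |x|}.indicator (uu X Φ χ β)) β]
    congr 1; ext α
    by_cases hx : r < |β - α|
    · rw [indicator_of_mem (show α ∈ {α : ℝ | r < |β - α|} from hx), indicator_of_mem]
      rw [abs_sub_comm] at hx; exact hx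
    · rw [indicator_of_notMem (show ¬ α ∈ {α : ℝ | r < |β - α|} from hx), indicator_of_notMem]
      rw [abs_sub_comm] at hx; exact hx
  have e2 := integral_neg_eq_self ({x : ℝ | r < |x|}.indicator (uu X Φ χ β)) volume
  have iu2 := iu.comp_neg
  have e3 : ∫ x, {x : ℝ | r < |x|}.indicator (vv X Φ χ β) x =
      2 * ∫ x, {x : ℝ | r < |x|}.indicator (uu X Φ χ β) x := by
    rw [two_mul]
    nth_rewrite 2 [← e2]
    rw [← integral_add iu iu2]
    congr 1; ext x
    by_cases hx : r < |x|
    · rw [indicator_of_mem (show x ∈ {x : ℝ | r < |x|} from hx),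
        indicator_of_mem (show x ∈ {x : ℝ | r < |x|} from hx),
        indicator_of_mem (show -x ∈ {x : ℝ | r < |x|} from by rw [← abs_neg] at hx; exact hx)]
      rfl
    · rw [indicator_of_notMem (show ¬ x ∈ {x : ℝ | r < |x|} from hx),
        indicator_of_notMem (show ¬ x ∈ {x : ℝ | r < |x|} from hx),
        indicator_of_notMem (show ¬ -x ∈ {x : ℝ | r < |x|} from by rw [← abs_neg] at hx; exact hx)]
      simp
  rw [e1, e3]; ring

lemma G0_meas {X Φ χ : ℝ → ℝ} (hX : Measurable X) (hΦ : Measurable Φ) (hχ : Measurable χ) :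
    Measurable (G0 X Φ χ) := by
  unfold G0
  have := (vv_meas hX hΦ hχ).stronglyMeasurable.integral_prod_right' (ν := volume)
  exact this.measurable.const_mul _

lemma G0_le {X Φ χ : ℝ → ℝ} (hε : 0 < ε) (β : ℝ)
    {C : ℝ} (hv : ∀ x, |vv X Φ χ β x| ≤ C * Bb ε β x) : |G0 X Φ χ β| ≤ 3 * π / 2 * C := by
  have h1 : |∫ x, vv X Φ χ β x| ≤ ∫ x, C * Bb ε β x :=
    abs_integral_le_integral_abs.trans (integral_mono_of_nonneg
      (Eventually.of_forall fun _ => abs_nonneg _) ((Bb_int hε β).1.const_mul C)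
      (Eventually.of_forall hv))
  rw [integral_const_mul, (Bb_int hε β).2] at h1
  unfold G0
  rw [abs_mul, abs_of_pos (by norm_num : (0:ℝ) < 1 / 2)]
  linarith

lemma G0_integral {X Φ χ : ℝ → ℝ} (hX : Measurable X) (hΦm : Measurable Φ) (hχm : Measurable χ)
    (hΦ : ∀ a, |Φ a| ≤ Pk ε a) (hχ : ∀ a, |χ a| ≤ 1) (hε : 0 < ε) (hχe : ∀ x, χ (-x) = χ x)
    {C b : ℝ} (hv : ∀ β x, |vv X Φ χ β x| ≤ C * Bb ε β x) (hC : 0 ≤ C)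
    (h0 : ∀ β x, b < |β| → vv X Φ χ β x = 0) :
    ∫ β, G0 X Φ χ β = 0 := by
  have hvm := vv_meas hX hΦm hχm
  have ib : Integrable ((Icc (-b) b).indicator (fun _ => (1:ℝ))) := by
    rw [integrable_indicator_iff measurableSet_Icc]
    exact integrableOn_const measure_Icc_lt_top.ne
  have hv' : ∀ β x, |vv X Φ χ β x| ≤ (Icc (-b) b).indicator (fun _ => (1:ℝ)) β * (C * Bb ε β x) := by
    intro β x
    by_cases hβ : b < |β|
    · rw [h0 β x hβ, indicator_of_notMem (by intro h; have := abs_le.2 h; linarith)]; simp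
    · rw [indicator_of_mem (show β ∈ Icc (-b) b from abs_le.1 (not_lt.1 hβ)), one_mul]; exact hv β x
  have ivs : ∀ β, Integrable (vv X Φ χ β) := fun β =>
    ((Bb_int hε β).1.const_mul C).mono' 
      (hvm.comp (measurable_const.prodMk measurable_id)).aestronglyMeasurable 
      (Eventually.of_forall (hv β))
  have iv : Integrable (fun p : ℝ × ℝ => vv X Φ χ p.1 p.2) (volume.prod volume) := by
    rw [integrable_prod_iff hvm.aestronglyMeasurable]
    refine ⟨Eventually.of_forall ivs, ?_⟩
    refine (ib.mul_const (C * (3 * π))).mono' 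
      (hvm.norm.stronglyMeasurable.integral_prod_right' (ν := volume)).aestronglyMeasurable 
      (Eventually.of_forall fun β => ?_)
    rw [Real.norm_eq_abs, abs_of_nonneg (integral_nonneg fun _ => norm_nonneg _)]
    rw [← (Bb_int hε β).2, ← integral_const_mul, ← integral_const_mul]
    exact integral_mono (ivs β).norm (((Bb_int hε β).1.const_mul C).const_mul _) (hv' β)
  unfold G0
  rw [integral_const_mul, integral_integral_swap iv]
  have iPP : ∀ x, Integrable (fun a => PP X Φ a x) := fun x => by
    refine (Pk_int hε).mono' ?_ (Eventually.of_forall fun a => ?_)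
    · unfold PP kap; exact (by fun_prop : Measurable _).aestronglyMeasurable
    · unfold PP
      rw [Real.norm_eq_abs, abs_mul, abs_of_nonneg (kap_nonneg _ _)]
      exact (mul_le_of_le_one_left (abs_nonneg _) (kap_le_one _ _)).trans (hΦ a)
  have : ∀ x, ∫ β, vv X Φ χ β x = 0 := by
    intro x
    have e : ∀ β, vv X Φ χ β x = (PP X Φ (β + x) x - PP X Φ (β - x) x) * (χ x * x⁻¹) := 
      fun β => vv_eq hχe β x
    simp_rw [e]
    rw [integral_mul_const, integral_sub ((iPP x).comp_add_right x) ((iPP x).comp_sub_right x),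
      integral_add_right_eq_self (fun a => PP X Φ a x) x, integral_sub_right_eq_self (fun a => PP X Φ a x) x]
    simp
  simp [this]

lemma PH_of {δ ε : ℝ} (hε : 0 < ε) (h : InC2 δ ε φ) : PH ε φ := by
  obtain ⟨h1, h2, h3, h4⟩ := h
  refine ⟨h1, fun a => ?_, fun a => ?_⟩
  · by_cases ha : a ∈ Ioo (-δ) δ
    · have := (h4 a ha).1
      rw [sq_abs, add_comm] at this; exact this
    · have : φ a = 0 := image_eq_zero_of_notMem_tsupport (fun h => ha (h3 h))
      rw [this, abs_zero]; exact Pk_nonneg hε a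
  · by_cases ha : a ∈ Ioo (-δ) δ
    · exact (h4 a ha).2
    · have : deriv φ a = 0 := by
        by_contra hh
        exact ha (h3 (support_deriv_subset hh))
      rw [this, abs_zero]; positivity
end

lemma XX_of {δ A ε s : ℝ} {f f' g g' : ℝ → ℝ} (F : FF δ A f f') (G : FF δ A g g')
    (hε : ε = s ^ 2) (hs : 0 < s) (hsδ : s < δ)
    (hlo : ∀ a, |a| ≤ s → -ε ≤ f a + g a) : XX ε s (2 + 2 * A) (Xt ε f g) := by
  have hA := F.Apos
  refine ⟨?_, fun a ha => ?_, fun a ha => ?_, fun a b m hm ha hb => ?_, by linarith⟩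
  · unfold Xt
    have := F.meas
    have := G.meas
    fun_prop
  · unfold Xt; linarith [hlo a ha]
  · have h1 := F.d2 (x := a) (y := 0) (m := |a|) (by linarith) le_rfl (by simp)
    have h2 := G.d2 (x := a) (y := 0) (m := |a|) (by linarith) le_rfl (by simp)
    rw [F.f0, sub_zero, sub_zero] at h1
    rw [G.f0, sub_zero, sub_zero] at h2
    have h3 : A * |a| * |a| ≤ A * s * s := by gcongr
    have h4 := le_abs_self (f a)
    have h5 := le_abs_self (g a)
    unfold Xt
    rw [hε] at *
    nlinarith
  · have h1 := F.d2 (by linarith) ha hb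
    have h2 := G.d2 (by linarith) ha hb
    have h0 : 0 ≤ m := (abs_nonneg a).trans ha
    unfold Xt
    rw [show 2 * ε + f a + g a - (2 * ε + f b + g b) = (f a - f b) + (g a - g b) by ring]
    have h3 := abs_add_le (f a - f b) (g a - g b)
    have h4 : 0 ≤ m * |a - b| := by positivity
    nlinarith

lemma dyadic {ε x : ℝ} (hε : 0 < ε) {N : ℕ} (hx : |x| < 2 ^ N * ε) :
    ∃ k ∈ Finset.range (N + 1), |x| < 2 ^ k * ε ∧ ε ^ 2 / (|x| + ε) ^ 3 ≤ 8 * (ε⁻¹ * (1 / 8) ^ k) := by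
  classical
  have hex : ∃ k : ℕ, |x| < 2 ^ k * ε := ⟨N, hx⟩
  refine ⟨Nat.find hex, ?_, Nat.find_spec hex, ?_⟩
  · have := Nat.find_min' hex hx
    exact Finset.mem_range.2 (by omega)
  · have h0 := abs_nonneg x
    rcases Nat.eq_zero_or_eq_succ_pred (Nat.find hex) with h | h
    · rw [h, pow_zero, mul_one, div_le_iff₀ (by positivity)]
      have : ε ^ 3 ≤ (|x| + ε) ^ 3 := by gcongr; linarith
      calc ε ^ 2 = ε⁻¹ * ε ^ 3 := by field_simp
        _ ≤ ε⁻¹ * (|x| + ε) ^ 3 := by gcongr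
        _ ≤ _ := by
          have : 0 ≤ ε⁻¹ * (|x| + ε) ^ 3 := by positivity
          linarith
    · set j := (Nat.find hex).pred with hj
      have hm := Nat.find_min hex (m := j) (by omega)
      push Not at hm
      rw [h]
      have : (2 ^ j * ε) ^ 3 ≤ (|x| + ε) ^ 3 := by gcongr; linarith
      rw [div_le_iff₀ (by positivity)]
      have e8 : ((2:ℝ) ^ j) ^ 3 = 8 ^ j := by rw [← pow_mul, mul_comm, pow_mul]; norm_num
      calc ε ^ 2 = 8 * (ε⁻¹ * (1 / 8) ^ (j + 1)) * (2 ^ j * ε) ^ 3 := by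
            rw [mul_pow, e8, pow_succ, one_div_pow]; field_simp; ring
        _ ≤ _ := by gcongr

lemma exN {ε b : ℝ} (hε : 0 < ε) (hb : ε ≤ b) : ∃ N : ℕ, 2 ^ N * ε ≤ b ∧ b < 2 ^ (N + 1) * ε := by
  obtain ⟨N, h1, h2⟩ := exists_nat_pow_near (x := b / ε) (y := (2:ℝ)) (by rwa [le_div_iff₀ hε, one_mul])
    (by norm_num)
  exact ⟨N, by rwa [le_div_iff₀ hε] at h1, by rwa [div_lt_iff₀ hε] at h2⟩

lemma assemble {ε Cg Ct b M l c : ℝ} {τ G : ℝ → ℝ} (hε : 0 < ε) (hεb : ε ≤ b) (hCg : 0 ≤ Cg)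
    (hCt : 0 ≤ Ct) (hM : 0 ≤ M) (hl : 0 ≤ l)
    (hGm : Measurable G) (hG : ∀ x, |G x| ≤ Cg * (ε ^ 2 / (|x| + ε) ^ 3))
    (hG0 : ∀ x, b / 4 < |x| → G x = 0) (hGint : ∫ x, G x = 0)
    (hτ : ∀ R, ε ≤ R → R ≤ b → ∫⁻ x in Ioo (-R) R, ‖τ x - c‖ₑ ≤ ENNReal.ofReal (Ct * R ^ 2 * l * M)) :
    |∫ x, τ x * G x| ≤ 16 * Cg * Ct * ε * l * M := by
  by_cases hi : Integrable (fun x => τ x * G x)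
  swap
  · rw [integral_undef hi, abs_zero]; positivity
  have hGi : Integrable G := by
    have i0 : Integrable ((Icc (-(b / 4)) (b / 4)).indicator (fun _ => Cg * ε⁻¹)) := by
      rw [integrable_indicator_iff measurableSet_Icc]
      exact integrableOn_const measure_Icc_lt_top.ne
    refine i0.mono' hGm.aestronglyMeasurable (Eventually.of_forall fun x => ?_)
    by_cases hx : b / 4 < |x|
    · rw [hG0 x hx, norm_zero]
      exact indicator_nonneg (fun _ _ => by positivity) _
    · rw [indicator_of_mem (show x ∈ Icc (-(b / 4)) (b / 4) from abs_le.1 (not_lt.1 hx))]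
      refine (hG x).trans ?_
      gcongr
      rw [div_le_iff₀ (by positivity)]
      have : ε ^ 3 ≤ (|x| + ε) ^ 3 := by gcongr; linarith [abs_nonneg x]
      calc ε ^ 2 = ε⁻¹ * ε ^ 3 := by field_simp
        _ ≤ _ := by gcongr
  have i2 : Integrable (fun x => (τ x - c) * G x) := by
    refine (hi.sub (hGi.const_mul c)).congr (Eventually.of_forall fun x => ?_)
    simp only [Pi.sub_apply]; ring
  have e1 : ∫ x, τ x * G x = ∫ x, (τ x - c) * G x := by
    have : ∀ x, (τ x - c) * G x = τ x * G x - c * G x := fun x => by ring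
    simp_rw [this]
    rw [integral_sub hi (hGi.const_mul c), integral_const_mul, hGint]; simp
  rw [e1]
  set ρ : ℝ → ℝ := fun x => ((τ x - c) * G x) * (G x)⁻¹ with hρ
  have hρm : AEMeasurable ρ := i2.aestronglyMeasurable.aemeasurable.mul hGm.inv.aemeasurable
  have hρe : ∀ x, (τ x - c) * G x = ρ x * G x := by
    intro x
    rw [hρ]
    rcases eq_or_ne (G x) 0 with h | h
    · simp [h]
    · simp only []; field_simp
  have hρle : ∀ x, ‖ρ x‖ₑ ≤ ‖τ x - c‖ₑ := by
    intro x
    rw [hρ]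
    rcases eq_or_ne (G x) 0 with h | h
    · simp [h]
    · simp only [mul_inv_cancel_right₀ h]; exact le_rfl
  obtain ⟨N, hN1, hN2⟩ := exN hε hεb
  have pw : ∀ x, ‖(τ x - c) * G x‖ₑ ≤ ∑ k ∈ Finset.range (N + 1),
      ENNReal.ofReal (Cg * (8 * (ε⁻¹ * (1 / 8) ^ k))) * 
        (Ioo (-(2 ^ k * ε)) (2 ^ k * ε)).indicator (fun x => ‖ρ x‖ₑ) x := by
    intro x
    rw [hρe, enorm_mul]
    by_cases hx : b / 4 < |x|
    · rw [hG0 x hx]; simp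
    push Not at hx
    have hxN : |x| < 2 ^ N * ε := by
      have : (2:ℝ) ^ (N + 1) * ε = 2 * (2 ^ N * ε) := by ring
      have : 0 < (2:ℝ) ^ N * ε := by positivity
      linarith
    obtain ⟨k, hk, hk1, hk2⟩ := dyadic hε hxN
    refine le_trans ?_ (Finset.single_le_sum (f := fun k => 
      ENNReal.ofReal (Cg * (8 * (ε⁻¹ * (1 / 8) ^ k))) * 
        (Ioo (-(2 ^ k * ε)) (2 ^ k * ε)).indicator (fun x => ‖ρ x‖ₑ) x) (fun _ _ => bot_le) hk)
    rw [indicator_of_mem (show x ∈ Ioo (-(2 ^ k * ε)) (2 ^ k * ε) from abs_lt.1 hk1), mul_comm]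
    gcongr
    rw [Real.enorm_eq_ofReal_abs]
    refine ENNReal.ofReal_le_ofReal ((hG x).trans ?_)
    gcongr
  have hsum : ∫⁻ x, ‖(τ x - c) * G x‖ₑ ≤ ENNReal.ofReal (16 * Cg * Ct * ε * l * M) := by
    calc _ ≤ ∫⁻ x, ∑ k ∈ Finset.range (N + 1),
          ENNReal.ofReal (Cg * (8 * (ε⁻¹ * (1 / 8) ^ k))) * 
          (Ioo (-(2 ^ k * ε)) (2 ^ k * ε)).indicator (fun x => ‖ρ x‖ₑ) x := lintegral_mono pw
      _ = ∑ k ∈ Finset.range (N + 1), ENNReal.ofReal (Cg * (8 * (ε⁻¹ * (1 / 8) ^ k))) * 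
          ∫⁻ x in Ioo (-(2 ^ k * ε)) (2 ^ k * ε), ‖ρ x‖ₑ := by
          rw [lintegral_finsetSum']
          · refine Finset.sum_congr rfl fun k _ => ?_
            rw [lintegral_const_mul' _ _ ENNReal.ofReal_ne_top, lintegral_indicator measurableSet_Ioo]
          · intro k _
            exact (hρm.enorm.indicator measurableSet_Ioo).const_mul _
      _ ≤ ∑ k ∈ Finset.range (N + 1), ENNReal.ofReal (8 * Cg * Ct * ε * l * M * (1 / 2) ^ k) := by
          refine Finset.sum_le_sum fun k hk => ?_
          have hk' : k ≤ N := by simp at hk; omega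
          have hR1 : ε ≤ 2 ^ k * ε := le_mul_of_one_le_left hε.le (one_le_pow₀ (by norm_num))
          have hR2 : 2 ^ k * ε ≤ b := by
            refine le_trans ?_ hN1
            gcongr
            norm_num
          calc _ ≤ ENNReal.ofReal (Cg * (8 * (ε⁻¹ * (1 / 8) ^ k))) *
                ENNReal.ofReal (Ct * (2 ^ k * ε) ^ 2 * l * M) := by
                gcongr
                exact (lintegral_mono hρle).trans (hτ _ hR1 hR2)
            _ = _ := by
                rw [← ENNReal.ofReal_mul (by positivity)]
                congr 1
                have e8 : ((1:ℝ) / 8) ^ k * (2 ^ k) ^ 2 = (1 / 2) ^ k := by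
                  rw [← pow_mul, mul_comm k 2, pow_mul, ← mul_pow]; norm_num
                rw [← e8]
                field_simp
      _ = ENNReal.ofReal (∑ k ∈ Finset.range (N + 1), 8 * Cg * Ct * ε * l * M * (1 / 2) ^ k) := by
          rw [ENNReal.ofReal_sum_of_nonneg]
          intro k _; positivity
      _ ≤ _ := by
          refine ENNReal.ofReal_le_ofReal ?_
          rw [← Finset.mul_sum]
          have h2 : ∑ k ∈ Finset.range (N + 1), ((1:ℝ) / 2) ^ k ≤ 2 := sum_geometric_two_le _
          calc _ ≤ 8 * Cg * Ct * ε * l * M * 2 := by gcongr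
            _ = _ := by ring
  have := (enorm_integral_le_lintegral_enorm (fun x => (τ x - c) * G x)).trans hsum
  rw [Real.enorm_eq_ofReal_abs] at this
  exact (ENNReal.ofReal_le_ofReal_iff (by positivity)).1 this

lemma T1_core {δ A : ℝ} (hδ : δ ∈ Ioc (0:ℝ) (1/100)) (hA : 1 ≤ A)
    {ψ : ℝ → ℝ} (hψ : IsCutoff ψ) {L : ℝ} (hL0 : 0 < L)
    (hL : ∀ x y, |ψ x - ψ y| ≤ L * |x - y|) {ε : ℝ} (hε : ε ∈ Ioc (0:ℝ) (δ ^ 2 / 100))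
    {f g : ℝ → ℝ} (hfg : GoodFG δ A ε f g) {h : ℝ → ℝ} (hh : Measurable h) {M : ℝ} (hM : 0 < M)
    (hhM : ∀ x ∈ Ioo (-(2 * Real.sqrt ε)) (2 * Real.sqrt ε), |h x| ≤ M) {φ : ℝ → ℝ}
    (hφ : InC2 δ ε φ) :
    |∫ α : ℝ, T1 ψ ε f h α * Hstar ψ ε f g φ α| ≤
      16 * (3 * π / 2 * ((2 + 2 * A) ^ 2 * (512 * L + 64))) *
        (A * (1 + 2 * π ^ 2 + 2 * π) + 4 * (8 * A + 2 * A * L)) * ε * Real.log (1 / ε) * M := by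
  obtain ⟨hδ0, hδ1⟩ := hδ
  obtain ⟨hε0, hε1⟩ := hε
  set s := Real.sqrt ε with hsdef
  have hs : 0 < s := Real.sqrt_pos.2 hε0
  have hεs : ε = s ^ 2 := (Real.sq_sqrt hε0.le).symm
  have hsδ10 : s ≤ δ / 10 := by
    refine Real.sqrt_le_iff.2 ⟨by positivity, hε1.trans (le_of_eq (by ring))⟩
  have hs1 : s ≤ 1 / 1000 := by linarith
  have h2s : 2 * s < δ := by linarith
  have hεb : ε ≤ s / 8 := by rw [hεs]; nlinarith
  have hl : 1 ≤ Real.log (1 / ε) := by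
    rw [Real.le_log_iff_exp_le (by positivity), le_div_iff₀ hε0]
    have h1 := Real.exp_one_lt_d9
    have h2 : ε ≤ 1 / 8 := by linarith
    nlinarith
  have hA0 : 0 < A := by linarith
  have hπ := Real.pi_pos
  obtain ⟨f5, g5, f0, g0, fd, gd, hb, hlo⟩ := hfg
  have F := FF_of hδ0 hA0 f5 f0 fd (fun x hx i hi => by
    linarith [hb x hx i hi, abs_nonneg (iteratedDerivWithin i g (Ioo (-δ) δ) x)])
  have G := FF_of hδ0 hA0 g5 g0 gd (fun x hx i hi => by
    linarith [hb x hx i hi, abs_nonneg (iteratedDerivWithin i f (Ioo (-δ) δ) x)])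
  set D := Ioo (-δ) δ with hD
  set ft := D.indicator f with hft
  set gt := D.indicator g with hgt
  have HX : XX ε s (2 + 2 * A) (Xt ε ft gt) := by
    refine XX_of F G hεs hs (by linarith) fun a ha => ?_
    have haD : a ∈ D := abs_lt.1 (by linarith)
    rw [hft, hgt, indicator_of_mem haD, indicator_of_mem haD]
    have := abs_lt.1 (show |a| < 4 * s by linarith)
    exact hlo a this a this
  have Hφ := PH_of hε0 hφ
  set X := Xt ε ft gt with hXdef
  set χ := scut ψ (s / 2 ^ 6) with hχdef
  set Φ : ℝ → ℝ := fun a => scut ψ (s / 2 ^ 6) a * φ a with hΦdef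
  have hχm : Measurable χ := (scut_cont hψ _).measurable
  have hΦm : Measurable Φ := ((scut_cont hψ _).mul Hφ.cd.continuous).measurable
  have hχ : ∀ a, |χ a| ≤ 1 := scut_le hψ _
  have hΦ : ∀ a, |Φ a| ≤ Pk ε a := fun a => by
    rw [hΦdef]
    simp only [abs_mul]
    calc _ ≤ 1 * |φ a| := by gcongr; exact scut_le hψ _ _
      _ ≤ _ := by rw [one_mul]; exact Hφ.b0 a
  have hχe : ∀ x, χ (-x) = χ x := scut_even hψ _
  have hv : ∀ β x, |vv X Φ χ β x| ≤
      (2 + 2 * A) ^ 2 * (512 * L + 64) * (ε ^ 2 / (|β| + ε) ^ 3) * Bb ε β x :=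
    fun β x => vv_bound hψ hL0 hL HX Hφ hs hs1 hεs β x
  have hv0 : ∀ β x, s / 32 < |β| → vv X Φ χ β x = 0 := fun β x hβ => vv_zero hψ hs hβ x
  have hG0z : ∀ β, s / 32 < |β| → G0 X Φ χ β = 0 := fun β hβ => by
    unfold G0; simp [hv0 β _ hβ]
  have hGle : ∀ β, |G0 X Φ χ β| ≤
      3 * π / 2 * ((2 + 2 * A) ^ 2 * (512 * L + 64)) * (ε ^ 2 / (|β| + ε) ^ 3) := fun β =>
    (G0_le hε0 β (hv β)).trans (le_of_eq (by ring))
  have hGint : ∫ β, G0 X Φ χ β = 0 := by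
    refine G0_integral (C := (2 + 2 * A) ^ 2 * (512 * L + 64) * ε⁻¹) (b := s / 32)
      HX.meas hΦm hχm hΦ hχ hε0 hχe (fun β x => (hv β x).trans ?_) (by positivity) hv0
    have hB : 0 ≤ Bb ε β x :=
      add_nonneg (add_nonneg (Pk_nonneg hε0 _) (Pk_nonneg hε0 _)) (Pk_nonneg hε0 _)
    gcongr
    rw [div_le_iff₀ (by positivity)]
    have : ε ^ 3 ≤ (|β| + ε) ^ 3 := by gcongr; linarith [abs_nonneg β]
    calc ε ^ 2 = ε⁻¹ * ε ^ 3 := by field_simp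
      _ ≤ _ := by gcongr
  have hstar : ∀ β, Hstar ψ ε f g φ β = (2 * π)⁻¹ * G0 X Φ χ β := by
    intro β
    unfold Hstar
    rw [← pv_eq HX.meas hΦm hχm hΦ hχ hε0 β (hv β)]
    congr 2
    funext α
    by_cases hα : α ∈ D
    · have e1 : Xt ε f g α = X α := by
        rw [hXdef]; unfold Xt; rw [hft, hgt, indicator_of_mem hα, indicator_of_mem hα]
      unfold Hker uu PP kap
      rw [e1, show β + (α - β) = α by ring]
      simp only [hΦdef, hχdef, hsdef]
      ring
    · have e1 : φ α = 0 := image_eq_zero_of_notMem_tsupport fun h => hα (hφ.2.2.1 h)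
      unfold uu PP
      rw [show β + (α - β) = α by ring]
      simp [hΦdef, e1]
  set ht := (Ioo (-(2 * s)) (2 * s)).indicator h with hht
  have H : Bdd ht M (2 * s) := by
    refine ⟨hh.indicator measurableSet_Ioo, fun x => ?_, fun x hx => ?_, by positivity⟩
    · by_cases hx : x ∈ Ioo (-(2 * s)) (2 * s)
      · rw [hht, indicator_of_mem hx]; exact hhM x hx
      · rw [hht, indicator_of_notMem hx, abs_zero]; exact hM.le
    · exact indicator_of_notMem (fun h => by have := abs_lt.2 h; linarith) _
  have hT : ∀ α, |α| ≤ s / 32 → T1 ψ ε f h α = (2 * π)⁻¹ * pvI (FT ψ s ft ht α) α := by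
    intro α hα
    unfold T1
    congr 2
    funext β
    have hαD : α ∈ D := abs_lt.1 (by linarith)
    unfold FT kT
    by_cases hβ : β ∈ Ioo (-(2 * s)) (2 * s)
    · have hβD : β ∈ D := ⟨by linarith [hβ.1], by linarith [hβ.2]⟩
      rw [hft, hht, indicator_of_mem hαD, indicator_of_mem hβD, indicator_of_mem hβ]
    · have h1 : 2 * s ≤ |β| := not_lt.1 fun h => hβ (abs_lt.1 h)
      have h2 : s < |α - β| := by
        have := abs_sub_abs_le_abs_sub β α
        rw [abs_sub_comm] at this
        linarith
      rw [← hsdef, scut_zero hψ hs h2, mul_zero, mul_zero]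
  have hprod : ∀ α, T1 ψ ε f h α * Hstar ψ ε f g φ α =
      ((2 * π)⁻¹ * (2 * π)⁻¹) * (pvI (FT ψ s ft ht α) α * G0 X Φ χ α) := by
    intro α
    rw [hstar]
    by_cases hα : s / 32 < |α|
    · rw [hG0z α hα]; ring
    · rw [hT α (not_lt.1 hα)]; ring
  have hmain := assemble (τ := fun α => pvI (FT ψ s ft ht α) α) (G := G0 X Φ χ) (b := s / 8)
    (M := M) (l := Real.log (1 / ε)) (c := ∫ β, FT ψ s ft ht 0 β)
    (Ct := A * (1 + 2 * π ^ 2 + 2 * π) + 4 * (8 * A + 2 * A * L))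
    (Cg := 3 * π / 2 * ((2 + 2 * A) ^ 2 * (512 * L + 64)))
    hε0 hεb (by positivity) (by positivity) hM.le (by linarith)
    (G0_meas HX.meas hΦm hχm) hGle (fun x hx => hG0z x (by linarith)) hGint
    (fun R hR1 hR2 => T_L1 hψ hL0 hL F H hs (by linarith) h2s hε0 hl hR1 (by linarith) hR2 hM)
  have hk : (2 * π)⁻¹ * (2 * π)⁻¹ ≤ (1:ℝ) := by
    have : (2 * π)⁻¹ ≤ (1:ℝ) := inv_le_one_of_one_le₀ (by linarith [Real.pi_gt_three])
    have h0 : 0 ≤ (2 * π)⁻¹ := by positivity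
    nlinarith
  simp_rw [hprod]
  rw [integral_const_mul, abs_mul, abs_of_nonneg (show 0 ≤ (2 * π)⁻¹ * (2 * π)⁻¹ by positivity)]
  exact (mul_le_of_le_one_left (abs_nonneg _) hk).trans hmain


end

/-- **Z-norm bound for `T_{1,f}` (Lemma 3.3(i), estimate (3.20)).**  For every `h ∈ L∞(I_δ)`,
`‖T_{1,f}h‖_Z ≲ ε log(1/ε) ‖h‖_{L∞(I_{2√ε})}`, i.e. for every `φ ∈ C₂`,
`|∫ T_{1,f}h · H*φ| ≤ C ε log(1/ε) M` whenever `|h| ≤ M` on `I_{2√ε}`, with `C` depending only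
on `A`, `δ` (and `ψ`). -/
theorem T1_Znorm_bound (δ A : ℝ) (hδ : δ ∈ Ioc (0:ℝ) (1/100)) (hA : 1 ≤ A)
    (ψ : ℝ → ℝ) (hψ : IsCutoff ψ) :
    ∃ C : ℝ, 0 < C ∧
      ∀ ε : ℝ, ε ∈ Ioc (0:ℝ) (δ ^ 2 / 100) →
      ∀ f g : ℝ → ℝ, GoodFG δ A ε f g →
      ∀ h : ℝ → ℝ, Measurable h → (∃ M' : ℝ, ∀ x ∈ Ioo (-δ) δ, |h x| ≤ M') →
        ∀ M : ℝ, (∀ x ∈ Ioo (-(2 * Real.sqrt ε)) (2 * Real.sqrt ε), |h x| ≤ M) →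
          ∀ φ : ℝ → ℝ, InC2 δ ε φ →
            |∫ α : ℝ, T1 ψ ε f h α * Hstar ψ ε f g φ α| ≤ C * ε * Real.log (1 / ε) * M := by
  obtain ⟨L, hL0, hL⟩ := cut_lip hψ
  have hπ := Real.pi_pos
  have hA0 : 0 < A := by linarith
  refine ⟨16 * (3 * π / 2 * ((2 + 2 * A) ^ 2 * (512 * L + 64))) *
        (A * (1 + 2 * π ^ 2 + 2 * π) + 4 * (8 * A + 2 * A * L)), by positivity, ?_⟩
  intro ε hε f g hfg h hh _ M hM φ hφ
  have hM0 : 0 ≤ M := by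
    have : 0 < Real.sqrt ε := Real.sqrt_pos.2 hε.1
    exact (abs_nonneg _).trans (hM 0 ⟨by linarith, by linarith⟩)
  have key : ∀ η : ℝ, 0 < η → |∫ α : ℝ, T1 ψ ε f h α * Hstar ψ ε f g φ α| ≤
      16 * (3 * π / 2 * ((2 + 2 * A) ^ 2 * (512 * L + 64))) *
        (A * (1 + 2 * π ^ 2 + 2 * π) + 4 * (8 * A + 2 * A * L)) * ε * Real.log (1 / ε) * (M + η) :=
    fun η hη => T1_core hδ hA hψ hL0 hL hε hfg hh (by linarith)
      (fun x hx => (hM x hx).trans (by linarith)) hφ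
  set κ := 16 * (3 * π / 2 * ((2 + 2 * A) ^ 2 * (512 * L + 64))) *
        (A * (1 + 2 * π ^ 2 + 2 * π) + 4 * (8 * A + 2 * A * L)) * ε * Real.log (1 / ε)
  have ht : Tendsto (fun η : ℝ => κ * (M + η)) (nhdsWithin 0 (Ioi 0)) (nhds (κ * (M + 0))) :=
    ((continuous_const.mul (continuous_const.add continuous_id)).tendsto 0).mono_left
      nhdsWithin_le_nhds
  rw [add_zero] at ht
  exact ge_of_tendsto ht (by filter_upwards [self_mem_nhdsWithin] with η hη using key η hη)
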